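/- arXiv:1606.09445 — 2 statements merged into one kernel-verified Lean document; each statement's English description precedes it below -/
import Mathlib

section
/- The ℂ-algebra homomorphism φ from the polynomial ring ℂ[u_1,…,u_n,v] to S determined by φ(u_i) = 𝗎_i (1 ≤ i ≤ n) and φ(v) = 𝗏 has image equal to the Veronese subring S^s, and its kernel equals the ideal generated by the 2×2 minors of the 2×(n−1) matrix with first row (u_2, u_3, …, u_n, v^{p_2}) and second row (v^{p_1}, λ_3u_3+v^{p_3}, …, λ_nu_n+v^{p_n}, u_1). Consequently φ induces an isomorphism of ℤ-graded ℂ-algebras R_{p,λ} := ℂ[u_1,…,u_n,v]/(these minors) ≅ S^s, where ℂ[u_1,…,u_n,v] is graded by deg v := 1, deg u_1 := p_2, deg u_2 := p_1, and deg u_i := p_i for 3 ≤ i ≤ n. -/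
set_option synthInstance.maxHeartbeats 1000000
set_option maxHeartbeats 1000000

noncomputable section

open MvPolynomial

def LRel (ι : Type) [DecidableEq ι] (p : ι → ℕ) : AddSubgroup (Option ι → ℤ) :=
  AddSubgroup.closure
    { v | ∃ i : ι, v = (p i : ℤ) • Pi.single (some i) 1 - Pi.single (none : Option ι) 1 }

abbrev LGroup (ι : Type) [DecidableEq ι] (p : ι → ℕ) : Type :=
  (Option ι → ℤ) ⧸ LRel ι p

def egen {ι : Type} [DecidableEq ι] (p : ι → ℕ) (i : ι) : LGroup ι p :=
  QuotientAddGroup.mk (Pi.single (some i) 1)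

def cgen {ι : Type} [DecidableEq ι] (p : ι → ℕ) : LGroup ι p :=
  QuotientAddGroup.mk (Pi.single (none : Option ι) 1)

abbrev BPoly (n : ℕ) : Type := MvPolynomial (Fin n) ℂ

/-- The defining ideal `(xᵢ^{pᵢ} + x₁^{p₁} − λᵢx₂^{p₂} : 3 ≤ i ≤ n)` (0-indexed). -/
def BIdl (n : ℕ) [NeZero n] (p : Fin n → ℕ) (lam : Fin n → ℂ) : Ideal (BPoly n) :=
  Ideal.span { f | ∃ i : Fin n, 2 ≤ (i : ℕ) ∧
    f = X i ^ p i + X 0 ^ p 0 - C (lam i) * X 1 ^ p 1 }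

abbrev BAlg (n : ℕ) [NeZero n] (p : Fin n → ℕ) (lam : Fin n → ℂ) : Type :=
  BPoly n ⧸ BIdl n p lam

/-- The `L`-weight of an exponent vector, `deg xᵢ := eᵢ`. -/
def wtB {n : ℕ} (p : Fin n → ℕ) (m : Fin n →₀ ℕ) : LGroup (Fin n) p :=
  ∑ i : Fin n, m i • egen p i

def polyCompB {n : ℕ} (p : Fin n → ℕ) (y : LGroup (Fin n) p) :
    Submodule ℂ (BPoly n) where
  carrier := { f | ∀ m, coeff m f ≠ 0 → wtB p m = y }
  add_mem' := by
    intro f g hf hg m hm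
    by_cases h : coeff m f = 0
    · refine hg m fun h' => hm ?_
      simp [coeff_add, h, h']
    · exact hf m h
  zero_mem' := by
    intro m hm
    simp at hm
  smul_mem' := by
    intro c f hf m hm
    refine hf m fun h => hm ?_
    simp [coeff_smul, h]

/-- The homogeneous component `S_y ⊆ S` of the `L`-graded algebra `S`. -/
def SCompB (n : ℕ) [NeZero n] (p : Fin n → ℕ) (lam : Fin n → ℂ) (y : LGroup (Fin n) p) :
    Submodule ℂ (BAlg n p lam) :=
  (polyCompB p y).map (Ideal.Quotient.mkₐ ℂ (BIdl n p lam)).toLinearMap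

/-- The Veronese subring `S^x = ⊕_{k ∈ ℤ} S_{kx}`, as a subspace of `S`. -/
def SVerB (n : ℕ) [NeZero n] (p : Fin n → ℕ) (lam : Fin n → ℂ) (x : LGroup (Fin n) p) :
    Submodule ℂ (BAlg n p lam) :=
  ⨆ k : ℤ, SCompB n p lam (k • x)

/-- `S(y)^x = ⊕_{k ∈ ℤ} S_{y + kx}`, as a subspace of `S`. -/
def SShiftB (n : ℕ) [NeZero n] (p : Fin n → ℕ) (lam : Fin n → ℂ)
    (y x : LGroup (Fin n) p) : Submodule ℂ (BAlg n p lam) :=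
  ⨆ k : ℤ, SCompB n p lam (y + k • x)

/-- The polynomials `𝗎₁, …, 𝗎ₙ` (0-indexed). -/
def uPoly (n : ℕ) [NeZero n] (p : Fin n → ℕ) (i : Fin n) : BPoly n :=
  if (i : ℕ) = 0 then
    X 0 ^ (p 0 + p 1) * ∏ j ∈ Finset.univ.filter (fun j : Fin n => 2 ≤ (j : ℕ)), X j ^ p 1
  else if (i : ℕ) = 1 then
    X 1 ^ (p 0 + p 1) * ∏ j ∈ Finset.univ.filter (fun j : Fin n => 2 ≤ (j : ℕ)), X j ^ p 0
  else
    -(X 0 ^ p i * X 1 ^ (p 1 + p i) *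
      ∏ j ∈ Finset.univ.filter (fun j : Fin n => 2 ≤ (j : ℕ) ∧ j ≠ i), X j ^ p i)

/-- The elements `𝗎ᵢ ∈ S`. -/
def uElem (n : ℕ) [NeZero n] (p : Fin n → ℕ) (lam : Fin n → ℂ) (i : Fin n) :
    BAlg n p lam :=
  Ideal.Quotient.mk (BIdl n p lam) (uPoly n p i)

/-- The element `𝗏 = x₁x₂⋯xₙ ∈ S`. -/
def vElem (n : ℕ) [NeZero n] (p : Fin n → ℕ) (lam : Fin n → ℂ) : BAlg n p lam :=
  Ideal.Quotient.mk (BIdl n p lam) (∏ i : Fin n, X i)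

/-- The polynomial ring `ℂ[u₁,…,uₙ,v]`. -/
abbrev UVPoly (n : ℕ) : Type := MvPolynomial (Fin n ⊕ Unit) ℂ

/-- The weighted degree on `ℂ[u₁,…,uₙ,v]`:
`deg v = 1`, `deg u₁ = p₂`, `deg u₂ = p₁`, `deg uᵢ = pᵢ` for `i ≥ 3`. -/
def wtUV {n : ℕ} [NeZero n] (p : Fin n → ℕ) (m : (Fin n ⊕ Unit) →₀ ℕ) : ℕ :=
  m (Sum.inr ()) + ∑ i : Fin n, m (Sum.inl i) *
    (if (i : ℕ) = 0 then p 1 else if (i : ℕ) = 1 then p 0 else p i)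

/-- The weighted-homogeneous component of degree `d` of `ℂ[u₁,…,uₙ,v]`. -/
def UVComp {n : ℕ} [NeZero n] (p : Fin n → ℕ) (d : ℕ) : Submodule ℂ (UVPoly n) where
  carrier := { f | ∀ m, coeff m f ≠ 0 → wtUV p m = d }
  add_mem' := by
    intro f g hf hg m hm
    by_cases h : coeff m f = 0
    · refine hg m fun h' => hm ?_
      simp [coeff_add, h, h']
    · exact hf m h
  zero_mem' := by
    intro m hm
    simp at hm
  smul_mem' := by
    intro c f hf m hm
    refine hf m fun h => hm ?_
    simp [coeff_smul, h]

/-- The set of `2×2` minors of the matrix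
`(u₂, u₃, …, uₙ, v^{p₂} ; v^{p₁}, λ₃u₃+v^{p₃}, …, λₙuₙ+v^{pₙ}, u₁)`. -/
def minorSet (n : ℕ) [NeZero n] (p : Fin n → ℕ) (lam : Fin n → ℂ) : Set (UVPoly n) :=
  {X (Sum.inl 1) * X (Sum.inl 0) - X (Sum.inr ()) ^ (p 0 + p 1)} ∪
  { f | ∃ i : Fin n, 2 ≤ (i : ℕ) ∧
      f = X (Sum.inl 1) * (C (lam i) * X (Sum.inl i) + X (Sum.inr ()) ^ p i) -
        X (Sum.inr ()) ^ p 0 * X (Sum.inl i) } ∪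
  { f | ∃ i : Fin n, 2 ≤ (i : ℕ) ∧
      f = X (Sum.inl i) * X (Sum.inl 0) -
        X (Sum.inr ()) ^ p 1 * (C (lam i) * X (Sum.inl i) + X (Sum.inr ()) ^ p i) } ∪
  { f | ∃ i j : Fin n, 2 ≤ (i : ℕ) ∧ (i : ℕ) < (j : ℕ) ∧
      f = X (Sum.inl i) * (C (lam j) * X (Sum.inl j) + X (Sum.inr ()) ^ p j) -
        X (Sum.inl j) * (C (lam i) * X (Sum.inl i) + X (Sum.inr ()) ^ p i) }


/-! ### Basic facts on indices and products -/

theorem fin_zero_val {n : ℕ} [NeZero n] : ((0 : Fin n) : ℕ) = 0 := by simp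

theorem fin_one_val {n : ℕ} (hn : 3 ≤ n) [NeZero n] : ((1 : Fin n) : ℕ) = 1 := by
  rw [Fin.val_one']; exact Nat.mod_eq_of_lt (by omega)

theorem fin_cases3 {n : ℕ} (hn : 3 ≤ n) [NeZero n] (i : Fin n) :
    i = 0 ∨ i = 1 ∨ 2 ≤ (i : ℕ) := by
  rcases Nat.lt_or_ge (i : ℕ) 2 with h | h
  · have : (i : ℕ) = 0 ∨ (i : ℕ) = 1 := by omega
    rcases this with h | h
    · left; apply Fin.ext; rw [h, fin_zero_val]
    · right; left; apply Fin.ext; rw [h, fin_one_val hn]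
  · right; right; exact h

theorem prod_split {n : ℕ} (hn : 3 ≤ n) [NeZero n] {M : Type*} [CommMonoid M] (f : Fin n → M) :
    ∏ j, f j = f 0 * f 1 * ∏ j ∈ Finset.univ.filter (fun j : Fin n => 2 ≤ (j : ℕ)), f j := by
  have h01 : (0 : Fin n) ≠ 1 := by
    intro h; have := congrArg Fin.val h; rw [fin_zero_val, fin_one_val hn] at this; omega
  rw [← Finset.prod_filter_mul_prod_filter_not Finset.univ (fun j : Fin n => 2 ≤ (j : ℕ)), mul_comm]
  congr 1
  have : Finset.univ.filter (fun j : Fin n => ¬ 2 ≤ (j : ℕ)) = {0, 1} := by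
    ext j
    simp only [Finset.mem_filter, Finset.mem_univ, true_and, Finset.mem_insert,
      Finset.mem_singleton]
    constructor
    · intro h
      rcases fin_cases3 hn j with h1 | h1 | h1
      · exact Or.inl h1
      · exact Or.inr h1
      · exact absurd h1 h
    · rintro (rfl | rfl)
      · rw [fin_zero_val]; omega
      · rw [fin_one_val hn]; omega
  rw [this, Finset.prod_pair h01]

theorem sum_split {n : ℕ} (hn : 3 ≤ n) [NeZero n] {M : Type*} [AddCommMonoid M] (f : Fin n → M) :
    ∑ j, f j = f 0 + f 1 + ∑ j ∈ Finset.univ.filter (fun j : Fin n => 2 ≤ (j : ℕ)), f j :=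
  prod_split (M := Multiplicative M) hn f

theorem prod_split_at {n : ℕ} {M : Type*} [CommMonoid M] (f : Fin n → M)
    (i : Fin n) (hi : 2 ≤ (i : ℕ)) :
    ∏ j ∈ Finset.univ.filter (fun j : Fin n => 2 ≤ (j : ℕ)), f j =
      f i * ∏ j ∈ Finset.univ.filter (fun j : Fin n => 2 ≤ (j : ℕ) ∧ j ≠ i), f j := by
  rw [← Finset.mul_prod_erase _ f (a := i) (by simp [hi])]
  congr 2
  ext j
  simp [and_comm]

theorem sum_split_at {n : ℕ} {M : Type*} [AddCommMonoid M] (f : Fin n → M)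
    (i : Fin n) (hi : 2 ≤ (i : ℕ)) :
    ∑ j ∈ Finset.univ.filter (fun j : Fin n => 2 ≤ (j : ℕ)), f j =
      f i + ∑ j ∈ Finset.univ.filter (fun j : Fin n => 2 ≤ (j : ℕ) ∧ j ≠ i), f j :=
  prod_split_at (M := Multiplicative M) f i hi

theorem uPoly_zero {n : ℕ} [NeZero n] (p : Fin n → ℕ) :
    uPoly n p 0 = X 0 ^ (p 0 + p 1) *
      ∏ j ∈ Finset.univ.filter (fun j : Fin n => 2 ≤ (j : ℕ)), X j ^ p 1 := by
  simp [uPoly]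

theorem uPoly_one {n : ℕ} (hn : 3 ≤ n) [NeZero n] (p : Fin n → ℕ) :
    uPoly n p 1 = X 1 ^ (p 0 + p 1) *
      ∏ j ∈ Finset.univ.filter (fun j : Fin n => 2 ≤ (j : ℕ)), X j ^ p 0 := by
  unfold uPoly
  rw [fin_one_val hn]
  simp

theorem uPoly_ge {n : ℕ} [NeZero n] (p : Fin n → ℕ) (i : Fin n) (hi : 2 ≤ (i : ℕ)) :
    uPoly n p i = -(X 0 ^ p i * X 1 ^ (p 1 + p i) *
      ∏ j ∈ Finset.univ.filter (fun j : Fin n => 2 ≤ (j : ℕ) ∧ j ≠ i), X j ^ p i) := by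
  unfold uPoly
  rw [if_neg (by omega), if_neg (by omega)]

/-- The weights `p₂, p₁, p₃, …, pₙ`. -/
def omg {n : ℕ} [NeZero n] (p : Fin n → ℕ) (i : Fin n) : ℕ :=
  if (i : ℕ) = 0 then p 1 else if (i : ℕ) = 1 then p 0 else p i

theorem omg_zero {n : ℕ} [NeZero n] (p : Fin n → ℕ) : omg p 0 = p 1 := by
  simp [omg]

theorem omg_one {n : ℕ} (hn : 3 ≤ n) [NeZero n] (p : Fin n → ℕ) : omg p 1 = p 0 := by
  unfold omg
  rw [fin_one_val hn]
  simp

theorem omg_ge {n : ℕ} [NeZero n] (p : Fin n → ℕ) (i : Fin n) (hi : 2 ≤ (i : ℕ)) :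
    omg p i = p i := by
  unfold omg
  rw [if_neg (by omega), if_neg (by omega)]

theorem vpow_split {n : ℕ} (hn : 3 ≤ n) [NeZero n] (q : ℕ) :
    (∏ i : Fin n, (X i : BPoly n)) ^ q = X 0 ^ q * X 1 ^ q *
      ∏ j ∈ Finset.univ.filter (fun j : Fin n => 2 ≤ (j : ℕ)), X j ^ q := by
  rw [← Finset.prod_pow, prod_split hn]

/-- The map `φ`. -/
abbrev phi (n : ℕ) [NeZero n] (p : Fin n → ℕ) (lam : Fin n → ℂ) : UVPoly n →ₐ[ℂ] BAlg n p lam :=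
  MvPolynomial.aeval (Sum.elim (uElem n p lam) (fun _ => vElem n p lam))

theorem S_rel {n : ℕ} [NeZero n] (p : Fin n → ℕ) (lam : Fin n → ℂ) (i : Fin n)
    (hi : 2 ≤ (i : ℕ)) :
    (Ideal.Quotient.mk (BIdl n p lam) (X i)) ^ p i =
      algebraMap ℂ _ (lam i) * (Ideal.Quotient.mk (BIdl n p lam) (X 1)) ^ p 1 -
      (Ideal.Quotient.mk (BIdl n p lam) (X 0)) ^ p 0 := by
  have h : Ideal.Quotient.mk (BIdl n p lam) (X i ^ p i + X 0 ^ p 0 - C (lam i) * X 1 ^ p 1) = 0 :=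
    Ideal.Quotient.eq_zero_iff_mem.2 (Ideal.subset_span ⟨i, hi, rfl⟩)
  have hC : Ideal.Quotient.mk (BIdl n p lam) (C (lam i)) = algebraMap ℂ _ (lam i) := rfl
  simp only [map_add, map_sub, map_mul, map_pow, hC] at h
  linear_combination h

/-- columns of the matrix are proportional to `(x₂^{p₂}, x₁^{p₁})`. -/
theorem col_zero {n : ℕ} (hn : 3 ≤ n) [NeZero n] (p : Fin n → ℕ) (lam : Fin n → ℂ) :
    ∃ W, vElem n p lam ^ p 1 = W * (Ideal.Quotient.mk (BIdl n p lam) (X 1)) ^ p 1 ∧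
      uElem n p lam 0 = W * (Ideal.Quotient.mk (BIdl n p lam) (X 0)) ^ p 0 := by
  refine ⟨Ideal.Quotient.mk _ (X 0 ^ p 1 *
      ∏ j ∈ Finset.univ.filter (fun j : Fin n => 2 ≤ (j : ℕ)), X j ^ p 1), ?_, ?_⟩
  · rw [vElem, ← map_pow, ← map_pow, ← map_mul, vpow_split hn]; congr 1; ring
  · rw [uElem, uPoly_zero, ← map_pow, ← map_mul]; congr 1; ring

theorem col_one {n : ℕ} (hn : 3 ≤ n) [NeZero n] (p : Fin n → ℕ) (lam : Fin n → ℂ) :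
    ∃ W, uElem n p lam 1 = W * (Ideal.Quotient.mk (BIdl n p lam) (X 1)) ^ p 1 ∧
      vElem n p lam ^ p 0 = W * (Ideal.Quotient.mk (BIdl n p lam) (X 0)) ^ p 0 := by
  refine ⟨Ideal.Quotient.mk _ (X 1 ^ p 0 *
      ∏ j ∈ Finset.univ.filter (fun j : Fin n => 2 ≤ (j : ℕ)), X j ^ p 0), ?_, ?_⟩
  · rw [uElem, uPoly_one hn, ← map_pow, ← map_mul]; congr 1; ring
  · rw [vElem, ← map_pow, ← map_pow, ← map_mul, vpow_split hn]; congr 1; ring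

theorem col_ge {n : ℕ} (hn : 3 ≤ n) [NeZero n] (p : Fin n → ℕ) (lam : Fin n → ℂ)
    (i : Fin n) (hi : 2 ≤ (i : ℕ)) :
    ∃ W, uElem n p lam i = W * (Ideal.Quotient.mk (BIdl n p lam) (X 1)) ^ p 1 ∧
      algebraMap ℂ _ (lam i) * uElem n p lam i + vElem n p lam ^ p i =
        W * (Ideal.Quotient.mk (BIdl n p lam) (X 0)) ^ p 0 := by
  set E : BPoly n := ∏ j ∈ Finset.univ.filter (fun j : Fin n => 2 ≤ (j : ℕ) ∧ j ≠ i), X j ^ p i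
    with hE
  have hu : uElem n p lam i = Ideal.Quotient.mk _ (-(X 0 ^ p i * X 1 ^ p i * E)) *
      (Ideal.Quotient.mk (BIdl n p lam) (X 1)) ^ p 1 := by
    rw [uElem, uPoly_ge p i hi, ← map_pow, ← map_mul]; congr 1; ring
  refine ⟨Ideal.Quotient.mk _ (-(X 0 ^ p i * X 1 ^ p i * E)), hu, ?_⟩
  have hv : vElem n p lam ^ p i = Ideal.Quotient.mk _ ((X 0 ^ p i * X 1 ^ p i * E)) *
      (Ideal.Quotient.mk (BIdl n p lam) (X i)) ^ p i := by
    rw [vElem, ← map_pow, ← map_pow, ← map_mul, vpow_split hn, prod_split_at _ i hi]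
    congr 1; ring
  rw [hu, hv, S_rel p lam i hi, map_neg]
  ring

theorem minors_le_ker {n : ℕ} (hn : 3 ≤ n) [NeZero n] (p : Fin n → ℕ) (lam : Fin n → ℂ) :
    Ideal.span (minorSet n p lam) ≤ RingHom.ker (phi n p lam) := by
  rw [Ideal.span_le]
  obtain ⟨W0, h0, h0'⟩ := col_zero hn p lam
  obtain ⟨W1, h1, h1'⟩ := col_one hn p lam
  have hC : ∀ c, phi n p lam (C c) = algebraMap ℂ _ c := fun c => by simp [phi]
  have hU : ∀ i, phi n p lam (X (Sum.inl i)) = uElem n p lam i := fun i => by simp [phi]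
  have hV : phi n p lam (X (Sum.inr ())) = vElem n p lam := by simp [phi]
  intro f hf
  change phi n p lam f = 0
  rcases hf with ((hf | ⟨i, hi, rfl⟩) | ⟨i, hi, rfl⟩) | ⟨i, j, hi, hij, rfl⟩
  · rw [Set.mem_singleton_iff] at hf
    subst hf
    simp only [map_sub, map_mul, map_pow, hU, hV]
    rw [pow_add, h0, h1, h0', h1']; ring
  · obtain ⟨W, h, h'⟩ := col_ge hn p lam i hi
    simp only [map_sub, map_mul, map_pow, map_add, hU, hV, hC]
    rw [h', h1', h1, h]; ring
  · obtain ⟨W, h, h'⟩ := col_ge hn p lam i hi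
    simp only [map_sub, map_mul, map_pow, map_add, hU, hV, hC]
    rw [h', h0', h0, h]; ring
  · obtain ⟨W, h, h'⟩ := col_ge hn p lam i hi
    obtain ⟨Z, k, k'⟩ := col_ge hn p lam j (by omega)
    simp only [map_sub, map_mul, map_pow, map_add, hU, hV, hC]
    rw [h', k', h, k]; ring

/-! ### Weights -/

theorem wtB_eq {n : ℕ} (p : Fin n → ℕ) (m : Fin n →₀ ℕ) :
    wtB p m = Finsupp.weight (egen p) m := by
  rw [Finsupp.weight_apply, Finsupp.sum_fintype _ _ (by simp)]
  rfl

theorem mem_polyCompB {n : ℕ} (p : Fin n → ℕ) (y : LGroup (Fin n) p) (f : BPoly n) :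
    f ∈ polyCompB p y ↔ IsWeightedHomogeneous (egen p) f y := by
  constructor
  · intro h m hm
    rw [← wtB_eq]; exact h m hm
  · intro h m hm
    rw [wtB_eq]; exact h hm

theorem smul_egen {n : ℕ} (p : Fin n → ℕ) (i : Fin n) : p i • egen p i = cgen p := by
  unfold egen cgen
  rw [← QuotientAddGroup.mk_nsmul]
  rw [QuotientAddGroup.eq, ← neg_mem_iff]
  apply AddSubgroup.subset_closure
  refine ⟨i, ?_⟩
  rw [natCast_zsmul]; abel

theorem uPoly_wt {n : ℕ} (hn : 3 ≤ n) [NeZero n] (p : Fin n → ℕ) (i : Fin n) :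
    IsWeightedHomogeneous (egen p) (uPoly n p i) (omg p i • ∑ j, egen p j) := by
  have hX : ∀ (j : Fin n) (q : ℕ), IsWeightedHomogeneous (egen p) (X j ^ q : BPoly n)
    (q • egen p j) := fun j q => (isWeightedHomogeneous_X ℂ _ j).pow q
  rcases fin_cases3 hn i with rfl | rfl | hi
  · rw [uPoly_zero, omg_zero]
    have h := (hX 0 (p 0 + p 1)).mul (IsWeightedHomogeneous.prod
      (Finset.univ.filter (fun j : Fin n => 2 ≤ (j : ℕ))) _ _ (fun j _ => hX j (p 1)))
    have e : p 1 • ∑ j, egen p j = (p 0 + p 1) • egen p 0 +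
        ∑ j ∈ Finset.univ.filter (fun j : Fin n => 2 ≤ (j : ℕ)), p 1 • egen p j := by
      rw [sum_split hn, Finset.sum_nsmul, add_nsmul, smul_egen, ← smul_egen p 1, nsmul_add,
        nsmul_add]
      abel
    rw [e]; exact h
  · rw [uPoly_one hn, omg_one hn]
    have h := (hX 1 (p 0 + p 1)).mul (IsWeightedHomogeneous.prod
      (Finset.univ.filter (fun j : Fin n => 2 ≤ (j : ℕ))) _ _ (fun j _ => hX j (p 0)))
    have e : p 0 • ∑ j, egen p j = (p 0 + p 1) • egen p 1 +
        ∑ j ∈ Finset.univ.filter (fun j : Fin n => 2 ≤ (j : ℕ)), p 0 • egen p j := by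
      rw [sum_split hn, Finset.sum_nsmul, add_nsmul, smul_egen p 1, ← smul_egen p 0, nsmul_add,
        nsmul_add]
      abel
    rw [e]; exact h
  · rw [uPoly_ge p i hi, omg_ge p i hi]
    apply IsWeightedHomogeneous.neg
    have h := ((hX 0 (p i)).mul (hX 1 (p 1 + p i))).mul (IsWeightedHomogeneous.prod
      (Finset.univ.filter (fun j : Fin n => 2 ≤ (j : ℕ) ∧ j ≠ i)) _ _ (fun j _ => hX j (p i)))
    have e : p i • ∑ j, egen p j = (p i • egen p 0 + (p 1 + p i) • egen p 1) +
        ∑ j ∈ Finset.univ.filter (fun j : Fin n => 2 ≤ (j : ℕ) ∧ j ≠ i), p i • egen p j := by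
      rw [sum_split hn, sum_split_at _ i hi, Finset.sum_nsmul, add_nsmul, smul_egen p 1,
        ← smul_egen p i]
      simp only [nsmul_add]
      abel
    rw [e]; exact h

theorem vPoly_wt {n : ℕ} (p : Fin n → ℕ) :
    IsWeightedHomogeneous (egen p) (∏ i : Fin n, (X i : BPoly n)) (∑ j, egen p j) :=
  IsWeightedHomogeneous.prod _ _ _ (fun j _ => isWeightedHomogeneous_X ℂ _ j)

theorem LRel_mem {n : ℕ} (p : Fin n → ℕ) (v : Option (Fin n) → ℤ) (hv : v ∈ LRel (Fin n) p) :
    ∃ a : Fin n → ℤ, (∀ i, v (some i) = a i * p i) ∧ v none = - ∑ i, a i := by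
  induction hv using AddSubgroup.closure_induction with
  | mem x hx =>
    obtain ⟨i, rfl⟩ := hx
    refine ⟨Pi.single i 1, fun j => ?_, ?_⟩
    · by_cases h : j = i
      · subst h; simp
      · simp [h]
    · simp
  | zero => exact ⟨0, by simp, by simp⟩
  | add x y _ _ hx hy =>
    obtain ⟨a, h1, h2⟩ := hx
    obtain ⟨b, h3, h4⟩ := hy
    refine ⟨a + b, fun i => ?_, ?_⟩
    · simp [h1, h3, add_mul]
    · simp [h2, h4, Finset.sum_add_distrib]; ring
  | neg x _ hx =>
    obtain ⟨a, h1, h2⟩ := hx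
    refine ⟨-a, fun i => ?_, ?_⟩
    · simp [h1]
    · simp [h2]

theorem wtB_eq_zsmul {n : ℕ} (p : Fin n → ℕ) (m : Fin n →₀ ℕ) (k : ℤ)
    (h : wtB p m = k • ∑ i, egen p i) :
    ∃ a : Fin n → ℤ, (∀ i, (m i : ℤ) - k = a i * p i) ∧ ∑ i, a i = 0 := by
  have h1 : wtB p m = QuotientAddGroup.mk
      (∑ i : Fin n, m i • (Pi.single (some i) 1 : Option (Fin n) → ℤ)) := by
    unfold wtB egen
    rw [← QuotientAddGroup.mk'_apply, map_sum]
    simp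
  have h2 : k • ∑ i, egen p i = QuotientAddGroup.mk
      (k • ∑ i : Fin n, (Pi.single (some i) 1 : Option (Fin n) → ℤ)) := by
    unfold egen
    rw [← QuotientAddGroup.mk'_apply (LRel (Fin n) p) (k • _), map_zsmul, map_sum]
    simp
  rw [h1, h2, eq_comm, QuotientAddGroup.eq] at h
  obtain ⟨a, ha, ha'⟩ := LRel_mem p _ h
  refine ⟨a, fun i => ?_, ?_⟩
  · rw [← ha i]
    simp [Finset.sum_apply, Pi.single_apply]; ring
  · have : ∑ i, a i = -(-∑ i, a i) := by ring
    rw [this, ← ha']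
    simp [Finset.sum_apply]

/-! ### Reduction modulo the minors -/

theorem prod_red_lt {n : ℕ} (hn : 3 ≤ n) [NeZero n] (p : Fin n → ℕ) (lam : Fin n → ℂ)
    (hlam0 : ∀ i : Fin n, 2 ≤ (i : ℕ) → lam i ≠ 0)
    (hlamd : ∀ i j : Fin n, 2 ≤ (i : ℕ) → 2 ≤ (j : ℕ) → i ≠ j → lam i ≠ lam j)
    (i j : Fin n) (hij : (i : ℕ) < (j : ℕ)) :
    ∃ (α β γ : ℂ) (A B G : ℕ), (X (Sum.inl i) * X (Sum.inl j) -
      (C α * X (Sum.inr ()) ^ A * X (Sum.inl i) + C β * X (Sum.inr ()) ^ B * X (Sum.inl j) +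
        C γ * X (Sum.inr ()) ^ G) : UVPoly n) ∈ Ideal.span (minorSet n p lam) := by
  have key : ∀ x : UVPoly n, ∀ (c : ℂ) (f : UVPoly n), f ∈ minorSet n p lam → x = C c * f →
      x ∈ Ideal.span (minorSet n p lam) := by
    intro x c f hf h
    rw [h]; exact Ideal.mul_mem_left _ _ (Ideal.subset_span hf)
  rcases fin_cases3 hn i with rfl | rfl | hi
  · rcases fin_cases3 hn j with rfl | rfl | hj
    · omega
    · refine ⟨0, 0, 1, 0, 0, p 0 + p 1, key _ 1 _ (Or.inl (Or.inl (Or.inl rfl))) ?_⟩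
      simp; ring
    · refine ⟨0, lam j, 1, 0, p 1, p 1 + p j, key _ 1 _ (Or.inl (Or.inr ⟨j, hj, rfl⟩)) ?_⟩
      simp; ring
  · have hj : 2 ≤ (j : ℕ) := by rw [fin_one_val hn] at hij; omega
    have e : (C (lam j)⁻¹ * C (lam j) : UVPoly n) = 1 := by
      rw [← C_mul, inv_mul_cancel₀ (hlam0 j hj), C_1]
    refine ⟨-(lam j)⁻¹, (lam j)⁻¹, 0, p j, p 0, 0,
      key _ (lam j)⁻¹ _ (Or.inl (Or.inl (Or.inr ⟨j, hj, rfl⟩))) ?_⟩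
    simp only [C_neg, C_0]
    linear_combination (- X (Sum.inl 1) * X (Sum.inl j)) * e
  · have hj : 2 ≤ (j : ℕ) := by omega
    have hne : lam j - lam i ≠ 0 :=
      sub_ne_zero.2 (hlamd j i hj hi (fun h => by rw [h] at hij; omega))
    have e : (C (lam j - lam i)⁻¹ * (C (lam j) - C (lam i)) : UVPoly n) = 1 := by
      rw [← C_sub, ← C_mul, inv_mul_cancel₀ hne, C_1]
    refine ⟨-(lam j - lam i)⁻¹, (lam j - lam i)⁻¹, 0, p j, p i, 0,
      key _ (lam j - lam i)⁻¹ _ (Or.inr ⟨i, j, hi, hij, rfl⟩) ?_⟩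
    simp only [C_neg, C_0]
    linear_combination (- X (Sum.inl i) * X (Sum.inl j)) * e

theorem prod_red {n : ℕ} (hn : 3 ≤ n) [NeZero n] (p : Fin n → ℕ) (lam : Fin n → ℂ)
    (hlam0 : ∀ i : Fin n, 2 ≤ (i : ℕ) → lam i ≠ 0)
    (hlamd : ∀ i j : Fin n, 2 ≤ (i : ℕ) → 2 ≤ (j : ℕ) → i ≠ j → lam i ≠ lam j)
    (i j : Fin n) (hij : i ≠ j) :
    ∃ (α β γ : ℂ) (A B G : ℕ), (X (Sum.inl i) * X (Sum.inl j) -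
      (C α * X (Sum.inr ()) ^ A * X (Sum.inl i) + C β * X (Sum.inr ()) ^ B * X (Sum.inl j) +
        C γ * X (Sum.inr ()) ^ G) : UVPoly n) ∈ Ideal.span (minorSet n p lam) := by
  rcases lt_trichotomy (i : ℕ) (j : ℕ) with h | h | h
  · exact prod_red_lt hn p lam hlam0 hlamd i j h
  · exact absurd (Fin.ext h) hij
  · obtain ⟨α, β, γ, A, B, G, h⟩ := prod_red_lt hn p lam hlam0 hlamd j i h
    refine ⟨β, α, γ, B, A, G, ?_⟩
    convert h using 1
    ring

/-- The normal-form monomials `v^a` and `v^a uᵢ^{b+1}`. -/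
def bvec (n : ℕ) (k : ℕ × Option (Fin n × ℕ)) : UVPoly n :=
  X (Sum.inr ()) ^ k.1 * (k.2.elim 1 (fun q => X (Sum.inl q.1) ^ (q.2 + 1)))

def nfSub (n : ℕ) [NeZero n] (p : Fin n → ℕ) (lam : Fin n → ℂ) : Submodule ℂ (UVPoly n) :=
  Submodule.span ℂ (Set.range (bvec n)) ⊔ (Ideal.span (minorSet n p lam)).restrictScalars ℂ

theorem nf_mem (n : ℕ) [NeZero n] (p : Fin n → ℕ) (lam : Fin n → ℂ) (a : ℕ) (i : Fin n) (b : ℕ) :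
    X (Sum.inr ()) ^ a * X (Sum.inl i) ^ b ∈ nfSub n p lam := by
  apply Submodule.mem_sup_left
  apply Submodule.subset_span
  cases b with
  | zero => exact ⟨(a, none), by simp [bvec]⟩
  | succ b => exact ⟨(a, some (i, b)), by simp [bvec]⟩

theorem nf_mem_I (n : ℕ) [NeZero n] (p : Fin n → ℕ) (lam : Fin n → ℂ) (f : UVPoly n)
    (hf : f ∈ Ideal.span (minorSet n p lam)) : f ∈ nfSub n p lam :=
  Submodule.mem_sup_right hf

theorem nf_mul_u {n : ℕ} (hn : 3 ≤ n) [NeZero n] (p : Fin n → ℕ) (lam : Fin n → ℂ)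
    (hlam0 : ∀ i : Fin n, 2 ≤ (i : ℕ) → lam i ≠ 0)
    (hlamd : ∀ i j : Fin n, 2 ≤ (i : ℕ) → 2 ≤ (j : ℕ) → i ≠ j → lam i ≠ lam j)
    (i j : Fin n) (b : ℕ) : ∀ a : ℕ,
    X (Sum.inr ()) ^ a * X (Sum.inl i) ^ b * X (Sum.inl j) ∈ nfSub n p lam := by
  by_cases hij : i = j
  · subst hij
    intro a
    have := nf_mem n p lam a i (b + 1)
    rwa [pow_succ, ← mul_assoc] at this
  induction b with
  | zero =>
    intro a
    have := nf_mem n p lam a j 1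
    simpa using this
  | succ b ih =>
    intro a
    obtain ⟨α, β, γ, A, B, G, h⟩ := prod_red hn p lam hlam0 hlamd i j hij
    have h1 := nf_mem_I n p lam _
      (Ideal.mul_mem_left _ (X (Sum.inr ()) ^ a * X (Sum.inl i) ^ b) h)
    have h2 := (nfSub n p lam).smul_mem α (nf_mem n p lam (a + A) i (b + 1))
    have h3 := (nfSub n p lam).smul_mem β (ih (a + B))
    have h4 := (nfSub n p lam).smul_mem γ (nf_mem n p lam (a + G) i b)
    convert add_mem (add_mem (add_mem h1 h2) h3) h4 using 1
    simp only [smul_eq_C_mul]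
    ring

theorem nf_top {n : ℕ} (hn : 3 ≤ n) [NeZero n] (p : Fin n → ℕ) (lam : Fin n → ℂ)
    (hlam0 : ∀ i : Fin n, 2 ≤ (i : ℕ) → lam i ≠ 0)
    (hlamd : ∀ i j : Fin n, 2 ≤ (i : ℕ) → 2 ≤ (j : ℕ) → i ≠ j → lam i ≠ lam j)
    (f : UVPoly n) : f ∈ nfSub n p lam := by
  induction f using MvPolynomial.induction_on with
  | C c =>
    have := (nfSub n p lam).smul_mem c (nf_mem n p lam 0 0 0)
    simpa [smul_eq_C_mul] using this
  | add f g hf hg => exact add_mem hf hg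
  | mul_X f s hf =>
    have : nfSub n p lam ≤ (nfSub n p lam).comap (LinearMap.mulRight ℂ (X s : UVPoly n)) := by
      conv_lhs => rw [nfSub]
      refine sup_le ?_ ?_
      · rw [Submodule.span_le]
        rintro _ ⟨⟨a, κ⟩, rfl⟩
        simp only [Submodule.comap_coe, Set.mem_preimage, LinearMap.mulRight_apply, SetLike.mem_coe]
        rcases s with j | ⟨⟩
        · rcases κ with _ | ⟨i, b⟩
          · have := nf_mul_u hn p lam hlam0 hlamd j j 0 a
            simpa [bvec] using this
          · exact nf_mul_u hn p lam hlam0 hlamd i j (b + 1) a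
        · rcases κ with _ | ⟨i, b⟩
          · have := nf_mem n p lam (a + 1) 0 0
            simpa [bvec, pow_succ] using this
          · have := nf_mem n p lam (a + 1) i (b + 1)
            convert this using 1
            simp only [bvec, Option.elim]
            ring
      · intro x hx
        exact nf_mem_I n p lam _ (Ideal.mul_mem_right _ _ hx)
    exact this hf

/-! ### Partial fractions -/

theorem poly_indep (c : ℕ →₀ ℂ) (T : Set ℂ) (hT : T.Infinite)
    (h : ∀ z ∈ T, c.sum (fun d x => x * z ^ d) = 0) : c = 0 := by
  set P : Polynomial ℂ := c.sum (fun d x => Polynomial.monomial d x) with hP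
  have hP0 : P = 0 := by
    apply Polynomial.eq_zero_of_infinite_isRoot
    refine hT.mono ?_
    intro z hz
    simp only [Set.mem_ofPred_eq, Polynomial.IsRoot.def]
    rw [hP, Finsupp.sum, Polynomial.eval_finsetSum]
    have hz' := h z hz
    rw [Finsupp.sum] at hz'
    simpa [Polynomial.eval_monomial] using hz'
  ext d
  have : P.coeff d = c d := by
    rw [hP, Finsupp.sum, Polynomial.finsetSum_coeff]
    simp only [Polynomial.coeff_monomial]
    rw [Finset.sum_ite_eq']
    split_ifs with h1
    · rfl
    · exact (Finsupp.notMem_support_iff.1 h1).symm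
  rw [← this, hP0]; simp

def rfun {n : ℕ} (lam : Fin n → ℂ) (i : Fin n) (t : ℂ) : ℂ :=
  if (i : ℕ) = 0 then t else if (i : ℕ) = 1 then t⁻¹ else (t - lam i)⁻¹

def muv {n : ℕ} (lam : Fin n → ℂ) (i : Fin n) : ℂ :=
  if (i : ℕ) = 1 then 0 else lam i

def good {n : ℕ} (lam : Fin n → ℂ) (t : ℂ) : Prop := ∀ i : Fin n, (i : ℕ) ≠ 0 → t ≠ muv lam i

theorem rfun_ne {n : ℕ} (lam : Fin n → ℂ) (i : Fin n) (hi : (i : ℕ) ≠ 0) (t : ℂ) :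
    rfun lam i t = (t - muv lam i)⁻¹ := by
  unfold rfun muv
  rw [if_neg hi]
  split_ifs <;> simp

theorem good_infinite {n : ℕ} (lam : Fin n → ℂ) : {t | good lam t}.Infinite := by
  have : {t | good lam t}ᶜ.Finite := by
    refine (Set.finite_range (muv lam)).subset ?_
    intro t ht
    simp only [Set.mem_compl_iff, Set.mem_ofPred_eq, good] at ht
    push Not at ht
    obtain ⟨i, _, h⟩ := ht
    exact ⟨i, h.symm⟩
  intro hf
  exact Set.infinite_univ (by simpa using hf.union this)

def Rk {n : ℕ} (lam : Fin n → ℂ) (κ : Option (Fin n × ℕ)) (t : ℂ) : ℂ :=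
  κ.elim 1 (fun q => rfun lam q.1 t ^ (q.2 + 1))

open Filter Topology in
theorem pf_step {n : ℕ} (lam : Fin n → ℂ)
    (hmu : ∀ i j : Fin n, (i : ℕ) ≠ 0 → (j : ℕ) ≠ 0 → muv lam i = muv lam j → i = j)
    (c : Option (Fin n × ℕ) →₀ ℂ)
    (h : ∀ t, good lam t → c.sum (fun κ x => x * Rk lam κ t) = 0)
    (i : Fin n) (hi : (i : ℕ) ≠ 0) (B : ℕ) (hB : ∀ b, c (some (i, b)) ≠ 0 → b ≤ B) :
    c (some (i, B)) = 0 := by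
  classical
  set μ := muv lam i with hμ
  have T1 : Tendsto (fun t => ∑ κ ∈ c.support, c κ * Rk lam κ t * (t - μ) ^ (B + 1)) (𝓝[≠] μ)
      (𝓝 (∑ κ ∈ c.support, if κ = some (i, B) then c κ else 0)) := by
    apply tendsto_finsetSum
    intro κ hκ
    have hsub : Tendsto (fun t : ℂ => (t - μ) ^ (B + 1)) (𝓝[≠] μ) (𝓝 0) := by
      have : ContinuousAt (fun t : ℂ => (t - μ) ^ (B + 1)) μ := by fun_prop
      have := this.tendsto
      simp only [sub_self, ne_eq, Nat.add_eq_zero_iff, one_ne_zero, and_false, not_false_eq_true,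
        zero_pow] at this
      exact this.mono_left nhdsWithin_le_nhds
    have hgen : ContinuousAt (Rk lam κ) μ → κ ≠ some (i, B) →
        Tendsto (fun t => c κ * Rk lam κ t * (t - μ) ^ (B + 1)) (𝓝[≠] μ)
          (𝓝 (if κ = some (i, B) then c κ else 0)) := by
      intro h1 h2
      rw [if_neg h2]
      have h3 := (((h1.tendsto).mono_left nhdsWithin_le_nhds).const_mul (c κ)).mul hsub
      rwa [mul_zero] at h3
    rcases κ with _ | ⟨j, b⟩
    · apply hgen
      · exact continuousAt_const
      · simp
    · by_cases hj : j = i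
      · subst hj
        have hb := hB b (Finsupp.mem_support_iff.1 hκ)
        have h1 : Tendsto (fun t : ℂ => c (some (j, b)) * (t - μ) ^ (B - b)) (𝓝[≠] μ)
            (𝓝 (if (some (j, b)) = some (j, B) then c (some (j, b)) else 0)) := by
          have : ContinuousAt (fun t : ℂ => c (some (j, b)) * (t - μ) ^ (B - b)) μ := by fun_prop
          have := this.tendsto
          refine (this.mono_left nhdsWithin_le_nhds).congr' (Filter.EventuallyEq.refl _ _) |>.trans ?_
          apply le_of_eq
          congr 1
          by_cases hbB : b = B
          · subst hbB; simp
          · have : B - b ≠ 0 := by omega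
            simp [hbB, this]
        refine h1.congr' ?_
        filter_upwards [self_mem_nhdsWithin] with t ht
        have ht' : t - μ ≠ 0 := sub_ne_zero.2 ht
        simp only [Rk, Option.elim]
        rw [rfun_ne lam j hi, ← hμ]
        have : B + 1 = (B - b) + (b + 1) := by omega
        rw [this, pow_add _ (B - b) (b + 1), inv_pow, mul_comm ((t - μ) ^ (B - b)), mul_assoc,
          inv_mul_cancel_left₀ (pow_ne_zero _ ht')]
      · apply hgen
        · unfold Rk
          simp only [Option.elim]
          apply ContinuousAt.pow
          by_cases h0 : (j : ℕ) = 0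
          · have : rfun lam j = fun t => t := by
              funext t; simp [rfun, h0]
            rw [this]; exact continuousAt_id
          · have : rfun lam j = fun t => (t - muv lam j)⁻¹ := by
              funext t; exact rfun_ne lam j h0 t
            rw [this]
            apply ContinuousAt.inv₀ (by fun_prop)
            rw [sub_ne_zero]
            intro h2
            exact hj (hmu j i h0 hi h2.symm)
        · simp [hj]
  have T2 : Tendsto (fun t => ∑ κ ∈ c.support, c κ * Rk lam κ t * (t - μ) ^ (B + 1)) (𝓝[≠] μ)
      (𝓝 0) := by
    refine Tendsto.congr' ?_ tendsto_const_nhds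
    have hev : ∀ᶠ t in 𝓝[≠] μ, good lam t := by
      unfold good
      rw [eventually_all]
      intro j
      by_cases hj : j = i
      · subst hj
        filter_upwards [self_mem_nhdsWithin] with t ht _
        exact ht
      · by_cases h0 : (j : ℕ) = 0
        · exact Eventually.of_forall (fun t h => absurd h0 h)
        · have : ∀ᶠ t in 𝓝 μ, t ≠ muv lam j :=
            eventually_ne_nhds (fun h2 => hj (hmu j i h0 hi h2.symm))
          filter_upwards [nhdsWithin_le_nhds this] with t ht _
          exact ht
    filter_upwards [hev] with t ht
    rw [← Finset.sum_mul]
    have := h t ht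
    rw [Finsupp.sum] at this
    rw [this, zero_mul]
  have := tendsto_nhds_unique T1 T2
  rw [Finset.sum_ite_eq'] at this
  split_ifs at this with h1
  · exact this
  · exact Finsupp.notMem_support_iff.1 h1

theorem pf_indep {n : ℕ} (lam : Fin n → ℂ)
    (hmu : ∀ i j : Fin n, (i : ℕ) ≠ 0 → (j : ℕ) ≠ 0 → muv lam i = muv lam j → i = j)
    (c : Option (Fin n × ℕ) →₀ ℂ)
    (h : ∀ t, good lam t → c.sum (fun κ x => x * Rk lam κ t) = 0) : c = 0 := by
  have h1 : ∀ i : Fin n, (i : ℕ) ≠ 0 → ∀ b, c (some (i, b)) = 0 := by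
    intro i hi
    by_contra hcon
    push Not at hcon
    obtain ⟨b0, hb0⟩ := hcon
    have hfin : {b | c (some (i, b)) ≠ 0}.Finite := by
      have := c.support.finite_toSet.preimage
        (f := fun b : ℕ => (some (i, b) : Option (Fin n × ℕ)))
        (fun x _ y _ hxy => by simpa using hxy)
      refine this.subset ?_
      intro b hb
      simpa using hb
    obtain ⟨B, hB, hmax⟩ := Set.exists_max_image _ (fun b => b) hfin ⟨b0, hb0⟩
    exact hB (pf_step lam hmu c h i hi B (fun b hb => hmax b hb))
  set dg : Option (Fin n × ℕ) → ℕ := fun κ => κ.elim 0 (fun q => q.2 + 1) with hdg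
  set T : Set (Option (Fin n × ℕ)) := {κ | ∀ q, κ = some q → (q.1 : ℕ) = 0} with hT
  have hsupp : (c.support : Set (Option (Fin n × ℕ))) ⊆ T := by
    intro κ hκ q hq
    by_contra h0
    subst hq
    exact (Finsupp.mem_support_iff.1 hκ) (h1 q.1 h0 q.2)
  have hinj : Set.InjOn dg T := by
    intro x hx y hy hxy
    rcases x with _ | ⟨i, b⟩ <;> rcases y with _ | ⟨j, b'⟩
    · rfl
    · simp [hdg] at hxy
    · simp [hdg] at hxy
    · have e1 := hx _ rfl
      have e2 := hy _ rfl
      simp only [hdg, Option.elim] at hxy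
      have : i = j := Fin.ext (by simp at e1 e2; omega)
      have : b = b' := by omega
      subst_vars; rfl
  have hz : c.mapDomain dg = 0 := by
    apply poly_indep _ _ (good_infinite lam)
    intro t ht
    rw [Finsupp.sum_mapDomain_index (by simp) (by intros; ring)]
    rw [← h t ht]
    apply Finsupp.sum_congr
    intro κ hκ
    congr 1
    rcases κ with _ | q
    · simp [hdg, Rk]
    · have := hsupp hκ q rfl
      simp [hdg, Rk, rfun, this]
  ext κ
  by_cases hκ : κ ∈ c.support
  · rw [← Finsupp.mapDomain_apply' T c hsupp hinj (hsupp hκ), hz]; simp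
  · simpa using hκ

theorem prod_indep {n : ℕ} (lam : Fin n → ℂ)
    (hmu : ∀ i j : Fin n, (i : ℕ) ≠ 0 → (j : ℕ) ≠ 0 → muv lam i = muv lam j → i = j)
    (c : ℕ × Option (Fin n × ℕ) →₀ ℂ)
    (h : ∀ t z, good lam t → z ≠ 0 → c.sum (fun k x => x * (z ^ k.1 * Rk lam k.2 t)) = 0) :
    c = 0 := by
  have h1 : ∀ d, c.curry d = 0 := by
    intro d
    apply pf_indep lam hmu
    intro t ht
    set g : ℕ →₀ ℂ := c.curry.mapRange (fun k => k.sum (fun κ x => x * Rk lam κ t))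
      Finsupp.sum_zero_index
      with hg
    have : g = 0 := by
      apply poly_indep g {z | z ≠ 0}
      · exact (Set.finite_singleton (0 : ℂ)).infinite_compl
      · intro z hz
        rw [hg, Finsupp.sum_mapRange_index (fun _ => zero_mul _), ← h t z ht hz]
        rw [← Finsupp.sum_curry_index c (fun d κ x => x * (z ^ d * Rk lam κ t))]
        apply Finsupp.sum_congr
        intro d _
        rw [Finsupp.sum_mul]
        apply Finsupp.sum_congr
        intro κ _
        ring
    have := DFunLike.congr_fun this d
    rwa [hg, Finsupp.mapRange_apply] at this
  ext ⟨d, κ⟩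
  have := DFunLike.congr_fun (h1 d) κ
  simpa using this

/-! ### Points of `Spec S` -/

theorem mu_inj {n : ℕ} (lam : Fin n → ℂ)
    (hlam0 : ∀ i : Fin n, 2 ≤ (i : ℕ) → lam i ≠ 0)
    (hlamd : ∀ i j : Fin n, 2 ≤ (i : ℕ) → 2 ≤ (j : ℕ) → i ≠ j → lam i ≠ lam j)
    (i j : Fin n) (hi : (i : ℕ) ≠ 0) (hj : (j : ℕ) ≠ 0) (h : muv lam i = muv lam j) : i = j := by
  unfold muv at h
  split_ifs at h with h1 h2 h2
  · exact Fin.ext (by omega)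
  · exact absurd h.symm (hlam0 j (by omega))
  · exact absurd h (hlam0 i (by omega))
  · by_contra hne
    exact hlamd i j (by omega) (by omega) hne h

theorem point_exists {n : ℕ} [NeZero n] (p : Fin n → ℕ) (hp : ∀ i, 2 ≤ p i)
    (q : Fin n → ℂ) (hq : ∀ i, q i ≠ 0) (z : ℂ) (hz : z ≠ 0) :
    ∃ (x : Fin n → ℂ) (Y : ℂ), Y ≠ 0 ∧ (∀ i, x i ^ p i = q i * Y) ∧ ∏ i, x i = z := by
  have hp0 : ∀ i, 0 < p i := fun i => by have := hp i; omega
  choose ρ hρ using fun i => IsAlgClosed.exists_pow_nat_eq (q i) (hp0 i)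
  have hρ0 : ∀ i, ρ i ≠ 0 := by
    intro i h
    apply hq i
    rw [← hρ i, h, zero_pow (hp0 i).ne']
  set N := ∏ i, p i with hN
  have hN0 : 0 < N := Finset.prod_pos (fun i _ => hp0 i)
  have hdvd : ∀ i, p i ∣ N := fun i => Finset.dvd_prod_of_mem p (Finset.mem_univ i)
  have hM : 0 < ∑ i, N / p i := by
    apply Finset.sum_pos (fun i _ => Nat.div_pos (Nat.le_of_dvd hN0 (hdvd i)) (hp0 i))
    exact ⟨0, Finset.mem_univ _⟩
  have hP : ∏ i, ρ i ≠ 0 := Finset.prod_ne_zero_iff.2 (fun i _ => hρ0 i)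
  obtain ⟨s, hs⟩ := IsAlgClosed.exists_pow_nat_eq (z / ∏ i, ρ i) hM
  have hs0 : s ≠ 0 := by
    intro h
    rw [h, zero_pow hM.ne'] at hs
    exact (div_ne_zero hz hP) hs.symm
  refine ⟨fun i => ρ i * s ^ (N / p i), s ^ N, pow_ne_zero _ hs0, fun i => ?_, ?_⟩
  · rw [mul_pow, hρ, ← pow_mul, Nat.div_mul_cancel (hdvd i)]
  · rw [Finset.prod_mul_distrib, Finset.prod_pow_eq_pow_sum, hs]
    field_simp

theorem eval_hom {n : ℕ} (hn : 3 ≤ n) [NeZero n] (p : Fin n → ℕ) (hp : ∀ i, 2 ≤ p i)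
    (lam : Fin n → ℂ) (t z : ℂ) (ht : good lam t) (hz : z ≠ 0) :
    ∃ ψ : BAlg n p lam →ₐ[ℂ] ℂ, ψ (vElem n p lam) = z ∧
      ∀ i, ψ (uElem n p lam i) = z ^ omg p i * rfun lam i t := by
  have ht0 : t ≠ 0 := by
    have := ht 1 (by rw [fin_one_val hn]; omega)
    rwa [muv, if_pos (fin_one_val hn)] at this
  have htl : ∀ i : Fin n, 2 ≤ (i : ℕ) → t - lam i ≠ 0 := by
    intro i hi
    have := ht i (by omega)
    rw [muv, if_neg (by omega)] at this
    exact sub_ne_zero.2 this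
  set q : Fin n → ℂ := fun i => if (i : ℕ) = 0 then t else if (i : ℕ) = 1 then 1 else lam i - t
    with hq
  have hq0 : q 0 = t := by simp [hq]
  have hq1 : q 1 = 1 := by
    simp only [hq]
    rw [if_neg (by rw [fin_one_val hn]; omega), if_pos (fin_one_val hn)]
  have hqi : ∀ i : Fin n, 2 ≤ (i : ℕ) → q i = lam i - t := by
    intro i hi
    simp only [hq]
    rw [if_neg (by omega), if_neg (by omega)]
  obtain ⟨x, Y, hY, hx, hxz⟩ := point_exists p hp q (by
    intro i
    rcases fin_cases3 hn i with rfl | rfl | hi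
    · rwa [hq0]
    · rw [hq1]; exact one_ne_zero
    · rw [hqi i hi, ← neg_sub]; exact neg_ne_zero.2 (htl i hi)) z hz
  have hx0 : ∀ i, x i ≠ 0 := by
    have : ∏ i, x i ≠ 0 := by rwa [hxz]
    intro i
    exact Finset.prod_ne_zero_iff.1 this i (Finset.mem_univ i)
  have hX0 : x 0 ^ p 0 = t * Y := by rw [hx, hq0]
  have hX1 : x 1 ^ p 1 = Y := by rw [hx, hq1, one_mul]
  have hXi : ∀ i : Fin n, 2 ≤ (i : ℕ) → x i ^ p i = (lam i - t) * Y := by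
    intro i hi; rw [hx, hqi i hi]
  have hker : ∀ f ∈ BIdl n p lam, (aeval x : BPoly n →ₐ[ℂ] ℂ) f = 0 := by
    intro f hf
    have : BIdl n p lam ≤ RingHom.ker (aeval x : BPoly n →ₐ[ℂ] ℂ) := by
      unfold BIdl
      rw [Ideal.span_le]
      rintro _ ⟨i, hi, rfl⟩
      change (aeval x : BPoly n →ₐ[ℂ] ℂ) _ = 0
      simp only [map_add, map_sub, map_mul, map_pow, aeval_X, aeval_C]
      rw [hX0, hX1, hXi i hi]
      simp only [Algebra.algebraMap_self, RingHom.id_apply]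
      ring
    exact this hf
  refine ⟨Ideal.Quotient.liftₐ _ (aeval x) hker, ?_, ?_⟩
  · change aeval x (∏ i : Fin n, (X i : BPoly n)) = z
    rw [map_prod]; simpa using hxz
  · intro i
    change aeval x (uPoly n p i) = _
    have hzq : ∀ e : ℕ, z ^ e = x 0 ^ e * x 1 ^ e *
        ∏ j ∈ Finset.univ.filter (fun j : Fin n => 2 ≤ (j : ℕ)), x j ^ e := by
      intro e
      rw [← hxz, ← Finset.prod_pow, prod_split hn]
    rcases fin_cases3 hn i with rfl | rfl | hi
    · rw [uPoly_zero, omg_zero, hzq]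
      simp only [map_mul, map_pow, map_prod, aeval_X]
      rw [pow_add, hX0, hX1]
      simp only [rfun, fin_zero_val, if_true]
      ring
    · rw [uPoly_one hn, omg_one hn, hzq]
      simp only [map_mul, map_pow, map_prod, aeval_X]
      rw [pow_add, hX0, hX1]
      simp only [rfun, fin_one_val hn, if_true]
      simp only [one_ne_zero, if_false]
      field_simp
    · rw [uPoly_ge p i hi, omg_ge p i hi, hzq, prod_split_at _ i hi]
      simp only [map_mul, map_pow, map_prod, aeval_X, map_neg]
      rw [pow_add, hX1, hXi i hi, rfun, if_neg (by omega), if_neg (by omega)]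
      have := htl i hi
      field_simp
      ring

def dgk {n : ℕ} [NeZero n] (p : Fin n → ℕ) (κ : Option (Fin n × ℕ)) : ℕ :=
  κ.elim 0 (fun q => omg p q.1 * (q.2 + 1))

theorem bvec_indep {n : ℕ} (hn : 3 ≤ n) [NeZero n] (p : Fin n → ℕ) (hp : ∀ i, 2 ≤ p i)
    (lam : Fin n → ℂ)
    (hlam0 : ∀ i : Fin n, 2 ≤ (i : ℕ) → lam i ≠ 0)
    (hlamd : ∀ i j : Fin n, 2 ≤ (i : ℕ) → 2 ≤ (j : ℕ) → i ≠ j → lam i ≠ lam j) :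
    LinearIndependent ℂ (fun k => phi n p lam (bvec n k)) := by
  rw [linearIndependent_iff]
  intro l hl
  set g : ℕ × Option (Fin n × ℕ) → ℕ × Option (Fin n × ℕ) := fun k => (k.1 + dgk p k.2, k.2)
    with hg
  have hinj : Function.Injective g := by
    rintro ⟨a, κ⟩ ⟨a', κ'⟩ h
    simp only [hg, Prod.mk.injEq] at h
    obtain ⟨h1, rfl⟩ := h
    have : a = a' := by omega
    rw [this]
  have : l.mapDomain g = 0 := by
    apply prod_indep lam (mu_inj lam hlam0 hlamd)
    intro t z ht hz
    rw [Finsupp.sum_mapDomain_index (by simp) (by intros; ring)]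
    obtain ⟨ψ, h1, h2⟩ := eval_hom hn p hp lam t z ht hz
    have h3 := congrArg ψ hl
    rw [map_zero, Finsupp.linearCombination_apply, Finsupp.sum, map_sum] at h3
    rw [Finsupp.sum, ← h3]
    apply Finset.sum_congr rfl
    rintro ⟨a, κ⟩ _
    rw [map_smul, smul_eq_mul]
    congr 1
    rcases κ with _ | ⟨i, b⟩
    · simp [bvec, hg, dgk, Rk, phi, h1]
    · simp only [bvec, hg, dgk, Rk, phi, Option.elim, map_mul, map_pow, aeval_X, Sum.elim_inl,
        Sum.elim_inr, h1, h2]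
      rw [pow_add, pow_mul]; ring
  exact Finsupp.mapDomain_injective hinj (by rw [this, Finsupp.mapDomain_zero])

theorem ker_eq {n : ℕ} (hn : 3 ≤ n) [NeZero n] (p : Fin n → ℕ) (hp : ∀ i, 2 ≤ p i)
    (lam : Fin n → ℂ)
    (hlam0 : ∀ i : Fin n, 2 ≤ (i : ℕ) → lam i ≠ 0)
    (hlamd : ∀ i j : Fin n, 2 ≤ (i : ℕ) → 2 ≤ (j : ℕ) → i ≠ j → lam i ≠ lam j) :
    RingHom.ker (phi n p lam) = Ideal.span (minorSet n p lam) := by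
  apply le_antisymm _ (minors_le_ker hn p lam)
  intro f hf
  have hf0 : phi n p lam f = 0 := hf
  obtain ⟨g, hg, h, hh, rfl⟩ := Submodule.mem_sup.1 (nf_top hn p lam hlam0 hlamd f)
  have hh0 : phi n p lam h = 0 := minors_le_ker hn p lam hh
  rw [map_add, hh0, add_zero] at hf0
  obtain ⟨l, rfl⟩ := (Finsupp.mem_span_range_iff_exists_finsupp).1 hg
  have hl : l = 0 := by
    apply linearIndependent_iff.1 (bvec_indep hn p hp lam hlam0 hlamd)
    rw [Finsupp.linearCombination_apply, ← hf0, Finsupp.sum, Finsupp.sum, map_sum]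
    apply Finset.sum_congr rfl
    intro k _
    rw [map_smul]
  subst hl
  simpa using hh

/-! ### The graded pieces -/

/-- The weights as a function on all variables of `ℂ[u, v]`. -/
def wUV {n : ℕ} [NeZero n] (p : Fin n → ℕ) : Fin n ⊕ Unit → ℕ := Sum.elim (omg p) (fun _ => 1)

theorem wtUV_eq {n : ℕ} [NeZero n] (p : Fin n → ℕ) (m : (Fin n ⊕ Unit) →₀ ℕ) :
    wtUV p m = Finsupp.weight (wUV p) m := by
  rw [Finsupp.weight_apply, Finsupp.sum_fintype _ _ (by simp), Fintype.sum_sum_type]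
  simp [wUV, wtUV, omg, add_comm]

theorem mem_UVComp {n : ℕ} [NeZero n] (p : Fin n → ℕ) (d : ℕ) (f : UVPoly n) :
    f ∈ UVComp p d ↔ IsWeightedHomogeneous (wUV p) f d := by
  constructor
  · intro h m hm
    rw [← wtUV_eq]; exact h m hm
  · intro h m hm
    rw [wtUV_eq]; exact h hm

theorem phi_monomial_mem {n : ℕ} (hn : 3 ≤ n) [NeZero n] (p : Fin n → ℕ) (lam : Fin n → ℂ)
    (m : (Fin n ⊕ Unit) →₀ ℕ) (c : ℂ) :
    phi n p lam (monomial m c) ∈ SCompB n p lam (wtUV p m • ∑ i, egen p i) := by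
  refine ⟨C c * ((∏ i, uPoly n p i ^ m (Sum.inl i)) * (∏ i, X i) ^ m (Sum.inr ())), ?_, ?_⟩
  · rw [SetLike.mem_coe, mem_polyCompB]
    apply IsWeightedHomogeneous.C_mul
    have h1 := IsWeightedHomogeneous.prod Finset.univ _ _
      (fun i _ => (uPoly_wt hn p i).pow (m (Sum.inl i)))
    have h2 := (vPoly_wt p).pow (m (Sum.inr ()))
    have h3 := h1.mul h2
    have e : wtUV p m • ∑ i, egen p i = ∑ i, m (Sum.inl i) • omg p i • ∑ j, egen p j +
        m (Sum.inr ()) • ∑ j, egen p j := by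
      simp only [smul_smul]
      rw [← Finset.sum_smul, ← add_smul]
      congr 1
      simp [wtUV, omg, add_comm]
    rw [e]; exact h3
  · change Ideal.Quotient.mk (BIdl n p lam) _ = _
    rw [phi, aeval_monomial, Finsupp.prod_fintype _ _ (by simp), Fintype.prod_sum_type]
    simp only [map_mul, map_prod, map_pow, Sum.elim_inl, Sum.elim_inr, uElem, vElem,
      Finset.univ_unique, Finset.prod_singleton]
    rfl

theorem phi_mem {n : ℕ} (hn : 3 ≤ n) [NeZero n] (p : Fin n → ℕ) (lam : Fin n → ℂ)
    (d : ℕ) (f : UVPoly n) (hf : f ∈ UVComp p d) :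
    phi n p lam f ∈ SCompB n p lam (d • ∑ i, egen p i) := by
  rw [f.as_sum, map_sum]
  apply Submodule.sum_mem
  intro m hm
  have := phi_monomial_mem hn p lam m (coeff m f)
  rwa [hf m (mem_support_iff.1 hm)] at this

theorem binary_pow {A : Type*} [CommRing A] [Algebra ℂ A] (x y : A) (L : ℕ) :
    (Submodule.span ℂ {x, y}) ^ L ≤
      Submodule.span ℂ (Set.range (fun j : Fin (L + 1) => x ^ (j : ℕ) * y ^ (L - (j : ℕ)))) := by
  induction L with
  | zero =>
    rw [pow_zero, Submodule.one_eq_span, Submodule.span_le]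
    rintro _ rfl
    exact Submodule.subset_span ⟨0, by simp⟩
  | succ L ih =>
    rw [pow_succ]
    refine (mul_le_mul' ih le_rfl).trans ?_
    rw [Submodule.span_mul_span, Submodule.span_le]
    rintro _ ⟨_, ⟨j, rfl⟩, w, hw, rfl⟩
    have hj := j.2
    rcases hw with rfl | hw
    · refine Submodule.subset_span ⟨⟨j + 1, by omega⟩, ?_⟩
      have : L + 1 - ((j : ℕ) + 1) = L - j := by omega
      simp only [this]
      ring
    · rw [Set.mem_singleton_iff] at hw
      subst hw
      refine Submodule.subset_span ⟨⟨j, by omega⟩, ?_⟩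
      have : L + 1 - (j : ℕ) = (L - j) + 1 := by omega
      simp only [this]
      ring

theorem prod_mem_pow {A : Type*} [CommRing A] [Algebra ℂ A] {ι : Type*} (H : Submodule ℂ A)
    (q : ι → A) (hq : ∀ i, q i ∈ H) (e : ι → ℕ) (s : Finset ι) :
    ∏ i ∈ s, q i ^ e i ∈ H ^ (∑ i ∈ s, e i) := by
  classical
  induction s using Finset.induction_on with
  | empty =>
    rw [Finset.prod_empty, Finset.sum_empty, pow_zero]
    exact ⟨1, by simp⟩
  | insert a s ha ih =>
    rw [Finset.prod_insert ha, Finset.sum_insert ha, pow_add]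
    exact Submodule.mul_mem_mul (Submodule.pow_mem_pow _ (hq a) _) ih

/-- The upper bound for the graded piece. -/
def Wd (n : ℕ) [NeZero n] (p : Fin n → ℕ) (lam : Fin n → ℂ) (d : ℕ) :
    Submodule ℂ (BAlg n p lam) :=
  (Submodule.span ℂ (Set.range (fun j : Fin ((∑ i, d / p i) + 1) =>
    ((Ideal.Quotient.mk (BIdl n p lam) (X 0)) ^ p 0) ^ (j : ℕ) *
    ((Ideal.Quotient.mk (BIdl n p lam) (X 1)) ^ p 1) ^ ((∑ i, d / p i) - (j : ℕ))))).map
    (LinearMap.mulLeft ℂ (∏ i, (Ideal.Quotient.mk (BIdl n p lam) (X i)) ^ (d % p i)))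

instance (n : ℕ) [NeZero n] (p : Fin n → ℕ) (lam : Fin n → ℂ) (d : ℕ) :
    FiniteDimensional ℂ (Wd n p lam d) := by
  unfold Wd
  have := FiniteDimensional.span_of_finite ℂ
    (Set.finite_range (fun j : Fin ((∑ i, d / p i) + 1) =>
    ((Ideal.Quotient.mk (BIdl n p lam) (X 0)) ^ p 0) ^ (j : ℕ) *
    ((Ideal.Quotient.mk (BIdl n p lam) (X 1)) ^ p 1) ^ ((∑ i, d / p i) - (j : ℕ))))
  infer_instance

theorem Wd_finrank (n : ℕ) [NeZero n] (p : Fin n → ℕ) (lam : Fin n → ℂ) (d : ℕ) :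
    Module.finrank ℂ (Wd n p lam d) ≤ (∑ i, d / p i) + 1 := by
  unfold Wd
  have := FiniteDimensional.span_of_finite ℂ
    (Set.finite_range (fun j : Fin ((∑ i, d / p i) + 1) =>
    ((Ideal.Quotient.mk (BIdl n p lam) (X 0)) ^ p 0) ^ (j : ℕ) *
    ((Ideal.Quotient.mk (BIdl n p lam) (X 1)) ^ p 1) ^ ((∑ i, d / p i) - (j : ℕ))))
  refine (Submodule.finrank_map_le _ _).trans ?_
  refine (finrank_range_le_card _).trans ?_
  simp

theorem q_mem {n : ℕ} (hn : 3 ≤ n) [NeZero n] (p : Fin n → ℕ) (lam : Fin n → ℂ) (i : Fin n) :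
    (Ideal.Quotient.mk (BIdl n p lam) (X i)) ^ p i ∈
      Submodule.span ℂ {(Ideal.Quotient.mk (BIdl n p lam) (X 0)) ^ p 0,
        (Ideal.Quotient.mk (BIdl n p lam) (X 1)) ^ p 1} := by
  have h0 : (Ideal.Quotient.mk (BIdl n p lam) (X 0)) ^ p 0 ∈
      Submodule.span ℂ {(Ideal.Quotient.mk (BIdl n p lam) (X 0)) ^ p 0,
        (Ideal.Quotient.mk (BIdl n p lam) (X 1)) ^ p 1} := Submodule.subset_span (by simp)
  have h1 : (Ideal.Quotient.mk (BIdl n p lam) (X 1)) ^ p 1 ∈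
      Submodule.span ℂ {(Ideal.Quotient.mk (BIdl n p lam) (X 0)) ^ p 0,
        (Ideal.Quotient.mk (BIdl n p lam) (X 1)) ^ p 1} := Submodule.subset_span (by simp)
  rcases fin_cases3 hn i with rfl | rfl | hi
  · exact h0
  · exact h1
  · rw [S_rel p lam i hi, ← Algebra.smul_def]
    exact sub_mem (Submodule.smul_mem _ _ h1) h0

theorem SComp_le {n : ℕ} (hn : 3 ≤ n) [NeZero n] (p : Fin n → ℕ) (hp : ∀ i, 2 ≤ p i)
    (lam : Fin n → ℂ) (d : ℕ) :
    SCompB n p lam (d • ∑ i, egen p i) ≤ Wd n p lam d := by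
  rintro _ ⟨f, hf, rfl⟩
  change Ideal.Quotient.mk (BIdl n p lam) f ∈ _
  rw [f.as_sum, map_sum]
  apply Submodule.sum_mem
  intro m hm
  have hw := hf m (mem_support_iff.1 hm)
  obtain ⟨a, ha, hs⟩ := wtB_eq_zsmul p m d (by rw [hw, natCast_zsmul])
  have hmod : ∀ i, m i % p i = d % p i := by
    intro i
    have : (m i : ℤ) % (p i : ℤ) = (d : ℤ) % (p i : ℤ) := by
      rw [Int.emod_emod_of_dvd _ (dvd_refl _) |>.symm]
      have e : (m i : ℤ) = d + a i * p i := by linarith [ha i]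
      rw [e, Int.add_mul_emod_self_right]
      simp
    exact_mod_cast this
  have hdiv : ∑ i, m i / p i = ∑ i, d / p i := by
    have : ∑ i, ((m i : ℤ) / (p i : ℤ)) = ∑ i, ((d : ℤ) / (p i : ℤ)) := by
      have e : ∀ i, (m i : ℤ) / (p i : ℤ) = (d : ℤ) / (p i : ℤ) + a i := by
        intro i
        have e : (m i : ℤ) = d + a i * p i := by linarith [ha i]
        have hpi : (p i : ℤ) ≠ 0 := by have := hp i; omega
        rw [e, Int.add_mul_ediv_right _ _ hpi]
      rw [Finset.sum_congr rfl (fun i _ => e i), Finset.sum_add_distrib, hs, add_zero]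
    exact_mod_cast this
  have hsm : ∀ (c : ℂ) (x : BAlg n p lam), c • x = Ideal.Quotient.mk (BIdl n p lam) (C c) * x :=
    fun c x => Algebra.smul_def c x
  have hmono : Ideal.Quotient.mk (BIdl n p lam) (monomial m (coeff m f)) =
      coeff m f • ((∏ i, (Ideal.Quotient.mk (BIdl n p lam) (X i)) ^ (d % p i)) *
        ∏ i, ((Ideal.Quotient.mk (BIdl n p lam) (X i)) ^ p i) ^ (m i / p i)) := by
    rw [monomial_eq, Finsupp.prod_fintype _ _ (by simp), map_mul, map_prod, hsm,
      ← Finset.prod_mul_distrib]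
    congr 1
    apply Finset.prod_congr rfl
    intro i _
    rw [map_pow, ← pow_mul, ← pow_add, ← hmod i, Nat.mod_add_div]
  rw [hmono]
  apply Submodule.smul_mem
  refine ⟨_, ?_, rfl⟩
  have h1 := prod_mem_pow _ _ (q_mem hn p lam) (fun i => m i / p i) Finset.univ
  rw [hdiv] at h1
  exact binary_pow _ _ _ h1

/-- Index set of the basis in degree `d`. -/
abbrev Jd {n : ℕ} [NeZero n] (p : Fin n → ℕ) (d : ℕ) : Type :=
  Option (Σ i : Fin n, Fin (d / omg p i))

def jmap {n : ℕ} [NeZero n] (p : Fin n → ℕ) (d : ℕ) (j : Jd p d) : ℕ × Option (Fin n × ℕ) :=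
  j.elim (d, none) (fun q => (d - omg p q.1 * (q.2 + 1), some (q.1, q.2)))

theorem jmap_inj {n : ℕ} [NeZero n] (p : Fin n → ℕ) (d : ℕ) : Function.Injective (jmap p d) := by
  rintro (_ | ⟨i, b⟩) (_ | ⟨i', b'⟩) h
  · rfl
  · simp [jmap] at h
  · simp [jmap] at h
  · simp only [jmap, Option.elim, Prod.mk.injEq, Option.some.injEq] at h
    obtain ⟨_, rfl, h2⟩ := h
    rw [Fin.ext h2]

theorem Jd_card {n : ℕ} (hn : 3 ≤ n) [NeZero n] (p : Fin n → ℕ) (d : ℕ) :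
    Fintype.card (Jd p d) = (∑ i, d / p i) + 1 := by
  rw [Fintype.card_option, Fintype.card_sigma]
  congr 1
  simp only [Fintype.card_fin]
  rw [sum_split hn, sum_split hn (fun i => d / p i), omg_zero, omg_one hn, add_comm (d / p 1)]
  congr 1
  apply Finset.sum_congr rfl
  intro i hi
  rw [omg_ge p i (by simpa using hi)]

theorem jvec_mem {n : ℕ} [NeZero n] (p : Fin n → ℕ) (d : ℕ) (j : Jd p d) :
    bvec n (jmap p d j) ∈ UVComp p d := by
  rw [mem_UVComp]
  have hv : ∀ a, IsWeightedHomogeneous (wUV p) (X (Sum.inr ()) ^ a : UVPoly n) a := by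
    intro a
    have := (isWeightedHomogeneous_X ℂ (wUV p) (Sum.inr ())).pow a
    simpa [wUV] using this
  rcases j with _ | ⟨i, b⟩
  · simpa [bvec, jmap] using hv d
  · have h1 := (isWeightedHomogeneous_X ℂ (wUV p) (Sum.inl i)).pow ((b : ℕ) + 1)
    have h2 := (hv (d - omg p i * (b + 1))).mul h1
    have hle : omg p i * ((b : ℕ) + 1) ≤ d :=
      (Nat.mul_le_mul_left _ b.2).trans (Nat.mul_div_le d _)
    have e : d - omg p i * ((b : ℕ) + 1) + ((b : ℕ) + 1) • wUV p (Sum.inl i) = d := by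
      simp only [wUV, Sum.elim_inl, smul_eq_mul]
      rw [mul_comm ((b : ℕ) + 1)]
      omega
    rw [e] at h2
    exact h2

theorem image_eq {n : ℕ} (hn : 3 ≤ n) [NeZero n] (p : Fin n → ℕ) (hp : ∀ i, 2 ≤ p i)
    (lam : Fin n → ℂ)
    (hlam0 : ∀ i : Fin n, 2 ≤ (i : ℕ) → lam i ≠ 0)
    (hlamd : ∀ i j : Fin n, 2 ≤ (i : ℕ) → 2 ≤ (j : ℕ) → i ≠ j → lam i ≠ lam j) (d : ℕ) :
    (UVComp p d).map (phi n p lam).toLinearMap = SCompB n p lam (d • ∑ i, egen p i) := by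
  have h1 : (UVComp p d).map (phi n p lam).toLinearMap ≤ SCompB n p lam (d • ∑ i, egen p i) := by
    rintro _ ⟨f, hf, rfl⟩
    exact phi_mem hn p lam d f hf
  apply le_antisymm h1
  have hli := (bvec_indep hn p hp lam hlam0 hlamd).comp (jmap p d) (jmap_inj p d)
  have hB : Submodule.span ℂ (Set.range
      ((fun k => phi n p lam (bvec n k)) ∘ jmap p d)) ≤
      (UVComp p d).map (phi n p lam).toLinearMap := by
    rw [Submodule.span_le]
    rintro _ ⟨j, rfl⟩
    exact ⟨_, jvec_mem p d j, rfl⟩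
  have h2 := SComp_le hn p hp lam d
  have h3 : Submodule.span ℂ (Set.range
      ((fun k => phi n p lam (bvec n k)) ∘ jmap p d)) = Wd n p lam d := by
    apply Submodule.eq_of_le_of_finrank_le ((hB.trans h1).trans h2)
    rw [finrank_span_eq_card hli, Jd_card hn]
    exact Wd_finrank n p lam d
  exact h2.trans (h3 ▸ hB)

theorem SComp_neg {n : ℕ} [NeZero n] (p : Fin n → ℕ)
    (lam : Fin n → ℂ) (k : ℤ) (hk : k < 0) :
    SCompB n p lam (k • ∑ i, egen p i) = ⊥ := by
  rw [eq_bot_iff]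
  rintro _ ⟨f, hf, rfl⟩
  have : f = 0 := by
    ext m
    by_contra hm
    obtain ⟨a, ha, hs⟩ := wtB_eq_zsmul p m k (hf m hm)
    have hpos : ∀ i, 0 < a i := by
      intro i
      have h1 : 0 < a i * (p i : ℤ) := by rw [← ha i]; omega
      exact pos_of_mul_pos_left h1 (by positivity)
    have : 0 < ∑ i, a i := Finset.sum_pos (fun i _ => hpos i) ⟨0, Finset.mem_univ _⟩
    omega
  subst this
  simp

theorem range_eq {n : ℕ} (hn : 3 ≤ n) [NeZero n] (p : Fin n → ℕ) (hp : ∀ i, 2 ≤ p i)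
    (lam : Fin n → ℂ)
    (hlam0 : ∀ i : Fin n, 2 ≤ (i : ℕ) → lam i ≠ 0)
    (hlamd : ∀ i j : Fin n, 2 ≤ (i : ℕ) → 2 ≤ (j : ℕ) → i ≠ j → lam i ≠ lam j) :
    Subalgebra.toSubmodule (phi n p lam).range = SVerB n p lam (∑ i, egen p i) := by
  apply le_antisymm
  · rintro _ ⟨f, rfl⟩
    change phi n p lam f ∈ _
    rw [f.as_sum, map_sum]
    apply Submodule.sum_mem
    intro m _
    have := phi_monomial_mem hn p lam m (coeff m f)
    refine Submodule.mem_iSup_of_mem (wtUV p m : ℤ) ?_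
    rwa [natCast_zsmul]
  · refine iSup_le ?_
    intro k
    rcases lt_or_ge k 0 with hk | hk
    · rw [SComp_neg p lam k hk]; exact bot_le
    · obtain ⟨d, rfl⟩ := Int.eq_ofNat_of_zero_le hk
      rw [natCast_zsmul, ← image_eq hn p hp lam hlam0 hlamd d]
      rintro _ ⟨f, _, rfl⟩
      exact ⟨f, rfl⟩

/-- The `ℂ`-algebra map `φ : ℂ[u₁,…,uₙ,v] → S`, `uᵢ ↦ 𝗎ᵢ`, `v ↦ 𝗏`,
has image the Veronese subring `S^s`, kernel the ideal of `2×2` minors, and maps the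
weighted-homogeneous component of degree `d` onto `S_{d·s}`. -/
theorem veronese_presentation (n : ℕ) (hn : 3 ≤ n) [NeZero n] (p : Fin n → ℕ)
    (hp : ∀ i, 2 ≤ p i) (lam : Fin n → ℂ)
    (hlam0 : ∀ i : Fin n, 2 ≤ (i : ℕ) → lam i ≠ 0)
    (hlamd : ∀ i j : Fin n, 2 ≤ (i : ℕ) → 2 ≤ (j : ℕ) → i ≠ j → lam i ≠ lam j) :
    Subalgebra.toSubmodule
        (MvPolynomial.aeval (Sum.elim (uElem n p lam) (fun _ => vElem n p lam)) :
          UVPoly n →ₐ[ℂ] BAlg n p lam).range =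
      SVerB n p lam (∑ i, egen p i) ∧
    RingHom.ker
        (MvPolynomial.aeval (Sum.elim (uElem n p lam) (fun _ => vElem n p lam)) :
          UVPoly n →ₐ[ℂ] BAlg n p lam) =
      Ideal.span (minorSet n p lam) ∧
    ∀ d : ℕ,
      (MvPolynomial.aeval (Sum.elim (uElem n p lam) (fun _ => vElem n p lam)) :
          UVPoly n →ₐ[ℂ] BAlg n p lam) '' ↑(UVComp p d) =
        ↑(SCompB n p lam (d • ∑ i, egen p i)) := by
  refine ⟨range_eq hn p hp lam hlam0 hlamd, ker_eq hn p hp lam hlam0 hlamd, fun d => ?_⟩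
  rw [← image_eq hn p hp lam hlam0 hlamd d]
  rfl
end
end

section
/- Let r ≥ 2 and 1 ≤ a ≤ r−1 be integers with gcd(r,a) = 1. Let ε ∈ ℂ be a primitive r-th root of unity and let δ be the ℂ-algebra automorphism of the polynomial ring ℂ[X,Y] with δ(X) = εX and δ(Y) = ε^a Y. For t ∈ ℤ set S_t := {f ∈ ℂ[X,Y] : δ(f) = ε^t f}, so S_0 = ℂ[X,Y]^{⟨δ⟩} is the invariant ring and each S_t is an S_0-submodule of ℂ[X,Y]. Then for every integer 0 ≤ t ≤ r, Ext^1_{S_0}(S_t, S_0) = 0 (i.e., S_t is a special Cohen–Macaulay S_0-module) if and only if t ∈ I(r,a). -/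
set_option synthInstance.maxHeartbeats 1000000
set_option maxHeartbeats 1000000

noncomputable section

open MvPolynomial CategoryTheory

/-- The `i`-series of the Hirzebruch–Jung continued fraction expansion of `r/a`:
`i₀ = r`, `i₁ = a` and, as long as `i_t > 0`, `i_{t+1}` is the unique integer with
`0 ≤ i_{t+1} < i_t` and `i_{t+1} ≡ −i_{t−1} (mod i_t)` (after the sequence reaches `0`
it stays `0`). -/
def iSeq (r a : ℕ) : ℕ → ℕ
  | 0 => r
  | 1 => a
  | (t + 2) =>
      if iSeq r a (t + 1) = 0 then 0
      else (((-(iSeq r a t : ℤ)) % (iSeq r a (t + 1) : ℤ)).toNat)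

/-- `I(r,a)`: the set of all terms of the `i`-series of `r/a`. -/
def ISet (r a : ℕ) : Set ℕ := Set.range (iSeq r a)

theorem aux_ext_data (R : Type) [CommRing R] (M N : Type) [AddCommGroup M] [Module R M]
    [AddCommGroup N] [Module R N] :
    ∃ (P0 P1 P2 : ModuleCat.{0} R) (d1 : P1 →ₗ[R] P0) (d2 : P2 →ₗ[R] P1) (π : P0 →ₗ[R] M),
      Module.Projective R P0 ∧ Function.Surjective π ∧
      (∀ x, π x = 0 ↔ ∃ y, d1 y = x) ∧ (∀ x, d1 x = 0 ↔ ∃ y, d2 y = x) ∧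
      (Subsingleton (((Ext R (ModuleCat.{0} R) 1).obj
        (Opposite.op (ModuleCat.of R M))).obj (ModuleCat.of R N)) ↔
        ∀ φ : P1 →ₗ[R] N, φ ∘ₗ d2 = 0 → ∃ ψ : P0 →ₗ[R] N, ψ ∘ₗ d1 = φ) := by
  let P := projectiveResolution (ModuleCat.of R M)
  let π : P.complex.X 0 ⟶ ModuleCat.of R M := P.π.f 0
  have hπ : P.complex.d 1 0 ≫ π = 0 := P.complex_d_comp_π_f_zero
  refine ⟨P.complex.X 0, P.complex.X 1, P.complex.X 2, (P.complex.d 1 0).hom,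
    (P.complex.d 2 1).hom, π.hom, ?_, ?_, ?_, ?_, ?_⟩
  · exact (IsProjective.iff_projective _).2 (P.projective 0)
  · have : Epi π := inferInstanceAs (Epi (P.π.f 0))
    exact (ModuleCat.epi_iff_surjective π).1 this
  · have h := P.exact₀
    have h := (ShortComplex.moduleCat_exact_iff _).1 h
    intro x
    refine ⟨fun hx => h x hx, ?_⟩
    rintro ⟨y, rfl⟩
    exact congrArg (fun f => f.hom y) hπ
  · have h := P.exact_succ 0
    have h := (ShortComplex.moduleCat_exact_iff _).1 h
    intro x
    refine ⟨fun hx => h x hx, ?_⟩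
    rintro ⟨y, rfl⟩
    exact congrArg (fun f => f.hom y) (P.complex.d_comp_d 2 1 0)
  · rw [← ModuleCat.isZero_iff_subsingleton,
      (P.isoExt (R := R) 1 (ModuleCat.of R N)).isZero_iff,
      ← HomologicalComplex.exactAt_iff_isZero_homology,
      HomologicalComplex.exactAt_iff' _ 0 1 2 (by simp) (by simp),
      ShortComplex.moduleCat_exact_iff]
    constructor
    · intro h φ hφ
      obtain ⟨ψ, hψ⟩ := h (ModuleCat.ofHom φ) (by
        change P.complex.d 2 1 ≫ ModuleCat.ofHom φ = 0
        ext x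
        exact LinearMap.congr_fun hφ x)
      refine ⟨ModuleCat.Hom.hom (show P.complex.X 0 ⟶ ModuleCat.of R N from ψ), ?_⟩
      change P.complex.d 1 0 ≫ (show P.complex.X 0 ⟶ ModuleCat.of R N from ψ) = ModuleCat.ofHom φ at hψ
      exact congrArg ModuleCat.Hom.hom hψ
    · intro h (φ : P.complex.X 1 ⟶ ModuleCat.of R N) hφ
      change P.complex.d 2 1 ≫ φ = 0 at hφ
      obtain ⟨ψ, hψ⟩ := h φ.hom (congrArg ModuleCat.Hom.hom hφ)
      refine ⟨(ModuleCat.ofHom ψ : P.complex.X 0 ⟶ ModuleCat.of R N), ?_⟩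
      change P.complex.d 1 0 ≫ ModuleCat.ofHom ψ = φ
      ext x
      exact LinearMap.congr_fun hψ x

theorem aux_ext_zero (R : Type) [CommRing R] (M N F : Type) [AddCommGroup M] [Module R M]
    [AddCommGroup N] [Module R N] [AddCommGroup F] [Module R F] [Module.Projective R F]
    (q : F →ₗ[R] M) (hq : Function.Surjective q)
    (h : ∀ φ : LinearMap.ker q →ₗ[R] N, ∃ ψ : F →ₗ[R] N, ∀ k : LinearMap.ker q, ψ k = φ k) :
    Subsingleton (((Ext R (ModuleCat.{0} R) 1).obj
        (Opposite.op (ModuleCat.of R M))).obj (ModuleCat.of R N)) := by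
  obtain ⟨P0, P1, P2, d1, d2, π, hP, hπ, h1, h2, he⟩ := aux_ext_data R M N
  rw [he]
  intro φ hφ
  -- descend φ to the range of d1
  have hker : LinearMap.ker d1 ≤ LinearMap.ker φ := by
    intro x hx
    obtain ⟨y, rfl⟩ := (h2 x).1 hx
    exact LinearMap.congr_fun hφ y
  let φb : LinearMap.range d1 →ₗ[R] N :=
    ((LinearMap.ker d1).liftQ φ hker) ∘ₗ (d1.quotKerEquivRange.symm : _ →ₗ[R] _)
  have hφb : ∀ y, φb ⟨d1 y, y, rfl⟩ = φ y := by
    intro y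
    simp only [φb, LinearMap.comp_apply, LinearEquiv.coe_coe]
    have : d1.quotKerEquivRange.symm ⟨d1 y, y, rfl⟩ = (LinearMap.ker d1).mkQ y := by
      rw [LinearEquiv.symm_apply_eq]; rfl
    rw [this]; simp
  obtain ⟨u, hu⟩ := Module.projective_lifting_property π q hπ
  obtain ⟨s, hs⟩ := Module.projective_lifting_property q π hq
  have hu' : ∀ x, π (u x) = q x := fun x => LinearMap.congr_fun hu x
  have hs' : ∀ x, q (s x) = π x := fun x => LinearMap.congr_fun hs x
  let uK : LinearMap.ker q →ₗ[R] LinearMap.range d1 :=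
    (u ∘ₗ (LinearMap.ker q).subtype).codRestrict _ (fun k => by
      have := (h1 (u k)).1 (by rw [hu']; exact k.2)
      exact this)
  obtain ⟨ψ, hψ⟩ := h (φb ∘ₗ uK)
  let w : P0 →ₗ[R] LinearMap.range d1 :=
    (LinearMap.id - u ∘ₗ s).codRestrict _ (fun p => by
      have := (h1 (p - u (s p))).1 (by rw [map_sub, hu', hs', sub_self])
      exact this)
  refine ⟨ψ ∘ₗ s + φb ∘ₗ w, ?_⟩
  ext y
  have hk : q (s (d1 y)) = 0 := by rw [hs']; exact (h1 _).2 ⟨y, rfl⟩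
  have e1 := hψ ⟨s (d1 y), hk⟩
  simp only [LinearMap.comp_apply, LinearMap.add_apply] at e1 ⊢
  rw [e1, ← map_add, ← hφb y]
  congr 1
  apply Subtype.ext
  change u (s (d1 y)) + (d1 y - u (s (d1 y))) = d1 y
  abel

theorem aux_ext_split (R : Type) [CommRing R] (M N E : Type) [AddCommGroup M] [Module R M]
    [AddCommGroup N] [Module R N] [AddCommGroup E] [Module R E]
    (i : N →ₗ[R] E) (q : E →ₗ[R] M) (hq : Function.Surjective q) (hi : Function.Injective i)
    (hiq : ∀ n, q (i n) = 0)
    (hex : ∀ e, q e = 0 → ∃ n, i n = e)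
    (h : Subsingleton (((Ext R (ModuleCat.{0} R) 1).obj
        (Opposite.op (ModuleCat.of R M))).obj (ModuleCat.of R N))) :
    ∃ σ : M →ₗ[R] E, ∀ x, q (σ x) = x := by
  obtain ⟨P0, P1, P2, d1, d2, π, hP, hπ, h1, h2, he⟩ := aux_ext_data R M N
  rw [he] at h
  obtain ⟨s, hs⟩ := Module.projective_lifting_property q π hq
  have hs' : ∀ x, q (s x) = π x := fun x => LinearMap.congr_fun hs x
  let φ : P1 →ₗ[R] N := ((LinearEquiv.ofInjective i hi).symm : _ →ₗ[R] _) ∘ₗ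
    ((s ∘ₗ d1).codRestrict (LinearMap.range i) (fun y => by
      apply hex
      rw [LinearMap.comp_apply, hs']
      exact (h1 _).2 ⟨y, rfl⟩))
  have hφ : ∀ y, i (φ y) = s (d1 y) := by
    intro y
    have : ∀ z, i ((LinearEquiv.ofInjective i hi).symm z) = z := by
      intro z
      have := congrArg Subtype.val ((LinearEquiv.ofInjective i hi).apply_symm_apply z)
      exact this
    simp only [φ, LinearMap.comp_apply, LinearEquiv.coe_coe]
    rw [this]; rfl
  obtain ⟨ψ, hψ⟩ := h φ (by
    ext y
    apply hi
    simp only [LinearMap.comp_apply, LinearMap.zero_apply, map_zero]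
    rw [hφ, (h2 _).2 ⟨y, rfl⟩, map_zero])
  let g : P0 →ₗ[R] E := s - i ∘ₗ ψ
  have hg : LinearMap.ker π ≤ LinearMap.ker g := by
    intro x hx
    obtain ⟨y, rfl⟩ := (h1 x).1 hx
    have := LinearMap.congr_fun hψ y
    simp only [LinearMap.comp_apply] at this
    simp [g, this, hφ]
  let σ : M →ₗ[R] E := ((LinearMap.ker π).liftQ g hg) ∘ₗ
    ((π.quotKerEquivOfSurjective hπ).symm : _ →ₗ[R] _)
  refine ⟨σ, fun x => ?_⟩
  obtain ⟨p, rfl⟩ := hπ x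
  have : (π.quotKerEquivOfSurjective hπ).symm (π p) = (LinearMap.ker π).mkQ p := by
    rw [LinearEquiv.symm_apply_eq]; rfl
  simp only [σ, LinearMap.comp_apply, LinearEquiv.coe_coe]
  rw [this]
  simp [g, hs', hiq]

theorem aux_step (r a : ℕ) (n : ℕ) (h : iSeq r a (n+1) ≠ 0) :
    iSeq r a (n+2) < iSeq r a (n+1) ∧
    ∃ k : ℤ, (iSeq r a (n+2) : ℤ) = k * iSeq r a (n+1) - iSeq r a n := by
  have hp : (0:ℤ) < iSeq r a (n+1) := by positivity
  have h0 := Int.emod_nonneg (-(iSeq r a n : ℤ)) hp.ne'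
  have h1 := Int.emod_lt_of_pos (-(iSeq r a n : ℤ)) hp
  have e : (iSeq r a (n+2) : ℤ) = (-(iSeq r a n : ℤ)) % (iSeq r a (n + 1) : ℤ) := by
    rw [iSeq, if_neg h, Int.toNat_of_nonneg h0]
  refine ⟨by omega, -((-(iSeq r a n : ℤ)) / (iSeq r a (n + 1) : ℤ)), ?_⟩
  rw [e, Int.emod_def]; ring

/-- The companion `j`-series. -/
theorem aux_inv (r a : ℕ) (ha : 1 ≤ a) (har : a < r) (n : ℕ) (h : iSeq r a n ≠ 0) :
    iSeq r a (n+1) < iSeq r a n ∧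
    ∃ j j' : ℤ, 0 ≤ j ∧ j < j' ∧
      (iSeq r a n : ℤ) * j' - iSeq r a (n+1) * j = r ∧
      (r : ℤ) ∣ a * j - iSeq r a n ∧ (r : ℤ) ∣ a * j' - iSeq r a (n+1) := by
  induction n with
  | zero =>
    refine ⟨har, 0, 1, le_rfl, by norm_num, ?_, ?_, ?_⟩ <;> simp [iSeq]
  | succ n ih =>
    have hn : iSeq r a n ≠ 0 := by
      intro h0
      cases n with
      | zero => simp [iSeq] at h0; omega
      | succ n => apply h; rw [iSeq]; simp [h0]
    obtain ⟨hlt, j, j', hj, hjj, hdet, hd, hd'⟩ := ih hn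
    obtain ⟨hlt', k, hk⟩ := aux_step r a n h
    refine ⟨hlt', j', k * j' - j, by omega, ?_, ?_, hd', ?_⟩
    · have : 2 ≤ k := by
        by_contra hc
        have : k ≤ 1 := by omega
        have h2 : k * (iSeq r a (n+1) : ℤ) ≤ 1 * iSeq r a (n+1) := by gcongr
        omega
      nlinarith
    · linear_combination hdet - j' * hk
    · have := dvd_sub (Dvd.dvd.mul_left hd' k) hd
      have e : (a : ℤ) * (k * j' - j) - iSeq r a (n + 1 + 1) =
          k * (a * j' - iSeq r a (n + 1)) - (a * j - iSeq r a n) := by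
        linear_combination -hk
      rw [e]
      exact this

theorem aux_gap (r a : ℤ) (hr : 0 < r) (i i' j j' x c : ℤ) (hi' : 0 ≤ i') (hii : i' < i)
    (hj : 0 ≤ j) (hjj : j < j') (hdet : i * j' - i' * j = r)
    (hd : r ∣ a * j - i) (hd' : r ∣ a * j' - i')
    (hx : 0 ≤ x) (hxi : x < i) (hxc : r ∣ a * c - x) (hc : 0 < c) : j' ≤ c := by
  by_contra hcj
  push Not at hcj
  obtain ⟨p, hp⟩ := hd
  obtain ⟨p', hp'⟩ := hd'
  obtain ⟨z, hz⟩ := hxc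
  -- l = det(v,w)/r, b = det(u,v)/r
  let l := p' * c - z * j'
  let b := z * j - p * c
  have hl : x * j' - i' * c = r * l := by
    simp only [l]; linear_combination (-j') * hz + c * hp'
  have hb : i * c - x * j = r * b := by
    simp only [b]; linear_combination (-c) * hp + j * hz
  have ex : x = l * i + b * i' := by
    have : r * x = r * (l * i + b * i') := by
      linear_combination (-x) * hdet + i * hl + i' * hb
    exact mul_left_cancel₀ hr.ne' this
  have ec : c = l * j + b * j' := by
    have : r * c = r * (l * j + b * j') := by
      linear_combination (-c) * hdet + j * hl + j' * hb
    exact mul_left_cancel₀ hr.ne' this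
  clear_value l b
  clear hp hp' hz
  rcases lt_trichotomy l 0 with h | h | h
  · have hb1 : 0 < b := by
      by_contra hn; push Not at hn
      nlinarith
    have : b ≤ -l := by
      by_contra hn; push Not at hn
      nlinarith
    nlinarith
  · subst h
    simp at ec
    rcases lt_or_ge b 1 with h1 | h1
    · nlinarith
    · nlinarith
  · have hb1 : b < 0 := by
      by_contra hn; push Not at hn
      nlinarith
    have : l ≤ -b := by
      by_contra hn; push Not at hn
      nlinarith
    nlinarith

theorem aux_reach (r a : ℕ) (ha : 1 ≤ a) (har : a < r) : ∃ n, iSeq r a n = 0 := by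
  by_contra h
  push Not at h
  have : ∀ n, iSeq r a n + n ≤ r := by
    intro n
    induction n with
    | zero => simp [iSeq]
    | succ n ih => have := (aux_inv r a ha har n (h n)).1; omega
  have h1 := this (r+1)
  omega

theorem aux_comb (r a : ℕ) (ha : 1 ≤ a) (har : a < r) (t j : ℕ) (ht : 0 < t) (htr : t < r)
    (hj : 0 < j) (hjt : a * j ≡ t [MOD r]) (hjm : ∀ c, 0 < c → c < j → ¬ a * c ≡ t [MOD r]) :
    t ∈ ISet r a ↔ ∀ c x, 0 < c → c < j → a * c ≡ x [MOD r] → t ≤ x := by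
  have tr : ∀ c x : ℕ, a * c ≡ x [MOD r] → (r:ℤ) ∣ a * c - x := by
    intro c x h
    have := (Nat.modEq_iff_dvd.1 h.symm)
    push_cast at this; exact this
  have tr' : ∀ c x : ℕ, (r:ℤ) ∣ a * c - x → a * c ≡ x [MOD r] := by
    intro c x h
    refine (Nat.modEq_iff_dvd.2 ?_).symm
    push_cast; exact h
  have hr0 : (0:ℤ) < r := by omega
  constructor
  · rintro ⟨n, rfl⟩
    intro c x hc hcj hcx
    cases n with
    | zero => simp [iSeq] at htr
    | succ n =>
      have hn : iSeq r a n ≠ 0 := by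
        intro h0
        cases n with
        | zero => simp [iSeq] at h0; omega
        | succ n => rw [iSeq] at ht; simp [h0] at ht
      obtain ⟨hlt, u, u', hu, huu, hdet, hd, hd'⟩ := aux_inv r a ha har n hn
      by_contra hx
      push Not at hx
      have h1 := aux_gap r a hr0 _ _ u u' x c (by positivity) (by exact_mod_cast hlt) hu huu hdet hd hd'
        (by positivity) (by omega) (tr _ _ hcx) (by omega)
      lift u' to ℕ using by omega
      exact hjm u' (by omega) (by omega) (tr' _ _ hd')
  · intro h
    classical
    have hex : ∃ n, iSeq r a n ≤ t := by
      obtain ⟨n, hn⟩ := aux_reach r a ha har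
      exact ⟨n, by omega⟩
    obtain ⟨m, hm, hmin⟩ : ∃ m, iSeq r a m ≤ t ∧ ∀ k < m, t < iSeq r a k :=
      ⟨Nat.find hex, Nat.find_spec hex, fun k hk => by simpa using Nat.find_min hex hk⟩
    cases m with
    | zero => simp [iSeq] at hm; omega
    | succ n =>
      have hn := hmin n (by omega)
      obtain ⟨hlt, u, u', hu, huu, hdet, hd, hd'⟩ := aux_inv r a ha har n (by omega)
      have h1 := aux_gap r a hr0 _ _ u u' t j (by positivity) (by exact_mod_cast hlt) hu huu hdet hd hd'
        (by positivity) (by omega) (tr _ _ hjt) (by omega)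
      lift u' to ℕ using by omega
      have h2 := tr' _ _ hd'
      refine ⟨n+1, ?_⟩
      rcases Nat.lt_or_ge u' j with h3 | h3
      · have := h u' _ (by omega) h3 h2
        omega
      · have : u' = j := by omega
        subst this
        have h4 := h2.symm.trans hjt
        exact Nat.ModEq.eq_of_lt_of_lt h4 (by omega) htr

section algebra

local notation "A" => MvPolynomial (Fin 2) ℂ

theorem aux_delta_monomial (a : ℕ) (ε : ℂ) (δ : A ≃ₐ[ℂ] A)
    (hδ0 : δ (X 0) = ε • X 0) (hδ1 : δ (X 1) = ε ^ a • X 1) (d : Fin 2 →₀ ℕ) (z : ℂ) :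
    δ (monomial d z) = ε ^ (d 0 + a * d 1) • monomial d z := by
  rw [monomial_eq, Finsupp.prod_fintype _ _ (by simp)]
  simp only [Fin.prod_univ_two, map_mul, map_pow, hδ0, hδ1, smul_pow]
  have : δ (C z) = C z := δ.commutes z
  rw [this]
  simp only [smul_eq_C_mul, map_pow]
  ring

theorem aux_delta_coeff (a : ℕ) (ε : ℂ) (δ : A ≃ₐ[ℂ] A)
    (hδ0 : δ (X 0) = ε • X 0) (hδ1 : δ (X 1) = ε ^ a • X 1) (f : A) (d : Fin 2 →₀ ℕ) :
    coeff d (δ f) = ε ^ (d 0 + a * d 1) * coeff d f := by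
  induction f using MvPolynomial.induction_on' with
  | monomial u z =>
    rw [aux_delta_monomial a ε δ hδ0 hδ1, coeff_smul, coeff_monomial, smul_eq_mul]
    split_ifs with h
    · rw [h]
    · simp
  | add p q hp hq => simp only [map_add, coeff_add, hp, hq]; ring

theorem aux_pow_iff (r : ℕ) (ε : ℂ) (hε : IsPrimitiveRoot ε r) (hr : 2 ≤ r) (m n : ℕ) :
    ε ^ m = ε ^ n ↔ m ≡ n [MOD r] := by
  have h0 : ε ≠ 0 := hε.ne_zero (by omega)
  obtain ⟨u, rfl⟩ : ∃ u : ℂˣ, (u : ℂ) = ε := ⟨Units.mk0 ε h0, rfl⟩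
  rw [hε.eq_orderOf, orderOf_units, ← pow_eq_pow_iff_modEq]
  norm_cast

theorem aux_support (r a : ℕ) (hr : 2 ≤ r) (ε : ℂ) (hε : IsPrimitiveRoot ε r) (δ : A ≃ₐ[ℂ] A)
    (hδ0 : δ (X 0) = ε • X 0) (hδ1 : δ (X 1) = ε ^ a • X 1) (t : ℕ) (f : A)
    (hf : δ f = ε ^ t • f) (d : Fin 2 →₀ ℕ) (hd : d ∈ f.support) :
    d 0 + a * d 1 ≡ t [MOD r] := by
  rw [← aux_pow_iff r ε hε hr]
  have h := aux_delta_coeff a ε δ hδ0 hδ1 f d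
  rw [hf, coeff_smul, smul_eq_mul] at h
  exact (mul_right_cancel₀ (mem_support_iff.1 hd) h).symm

theorem aux_weight (r a : ℕ) (hr : 2 ≤ r) (ε : ℂ) (hε : IsPrimitiveRoot ε r) (δ : A ≃ₐ[ℂ] A)
    (hδ0 : δ (X 0) = ε • X 0) (hδ1 : δ (X 1) = ε ^ a • X 1) (t : ℕ) (d : Fin 2 →₀ ℕ) (z : ℂ)
    (h : d 0 + a * d 1 ≡ t [MOD r]) :
    δ (monomial d z) = ε ^ t • monomial d z := by
  rw [aux_delta_monomial a ε δ hδ0 hδ1, (aux_pow_iff r ε hε hr _ _).2 h]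

theorem aux_dvd (i k : Fin 2) (hik : i ≠ k) (m n : ℕ) (f g : A)
    (h : X i ^ m * f = X k ^ n * g) : ∃ g' : A, g = X i ^ m * g' := by
  have hp : Prime (X i : A) := X_prime
  have h1 : (X i : A) ^ m ∣ X k ^ n * g := ⟨f, h.symm⟩
  have h2 : ¬ (X i : A) ∣ X k ^ n := fun hh => hik (X_dvd_X.1 (hp.dvd_of_dvd_pow hh))
  exact hp.pow_dvd_of_dvd_mul_left m h2 h1

theorem aux_mono_split (d : Fin 2 →₀ ℕ) (z : ℂ) (i : Fin 2) (t : ℕ) (h : t ≤ d i) :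
    monomial d z = X i ^ t * monomial (d - Finsupp.single i t) z := by
  rw [X_pow_eq_monomial, monomial_mul, one_mul, add_tsub_cancel_of_le]
  simpa using h

theorem aux_X_mul (i : Fin 2) (n : ℕ) {f g : A} (h : X i ^ n * f = X i ^ n * g) : f = g :=
  mul_left_cancel₀ (pow_ne_zero n (X_ne_zero i)) h


/-- `f` is a semi-invariant of weight `k`. -/
def WtP (ε : ℂ) (δ : A ≃ₐ[ℂ] A) (k : ℕ) (f : A) : Prop := δ f = ε ^ k • f

theorem WtP.mul {ε : ℂ} {δ : A ≃ₐ[ℂ] A} {k l : ℕ} {f g : A} (hf : WtP ε δ k f)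
    (hg : WtP ε δ l g) : WtP ε δ (k + l) (f * g) := by
  unfold WtP at *
  rw [map_mul, hf, hg, smul_mul_smul_comm, pow_add]

theorem WtP.add {ε : ℂ} {δ : A ≃ₐ[ℂ] A} {k : ℕ} {f g : A} (hf : WtP ε δ k f)
    (hg : WtP ε δ k g) : WtP ε δ k (f + g) := by
  unfold WtP at *
  rw [map_add, hf, hg, smul_add]

theorem WtP.neg {ε : ℂ} {δ : A ≃ₐ[ℂ] A} {k : ℕ} {f : A} (hf : WtP ε δ k f) :
    WtP ε δ k (-f) := by
  unfold WtP at *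
  rw [map_neg, hf, smul_neg]

theorem WtP.zero (ε : ℂ) (δ : A ≃ₐ[ℂ] A) (k : ℕ) : WtP ε δ k 0 := by
  unfold WtP
  rw [map_zero, smul_zero]

theorem WtP.congr {r : ℕ} {ε : ℂ} (hε : IsPrimitiveRoot ε r) (hr : 2 ≤ r) {δ : A ≃ₐ[ℂ] A}
    {k l : ℕ} {f : A} (h : k ≡ l [MOD r]) (hf : WtP ε δ k f) : WtP ε δ l f := by
  unfold WtP at *
  rw [hf, (aux_pow_iff r ε hε hr _ _).2 h]

theorem WtP.cancel {ε : ℂ} (h0 : ε ≠ 0) {δ : A ≃ₐ[ℂ] A} {k l : ℕ} {f g : A} (hf0 : f ≠ 0)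
    (hf : WtP ε δ k f) (hfg : WtP ε δ (k + l) (f * g)) : WtP ε δ l g := by
  unfold WtP at *
  rw [map_mul, hf, pow_add, ← smul_mul_smul_comm] at hfg
  exact mul_left_cancel₀ (smul_ne_zero (pow_ne_zero _ h0) hf0) hfg

theorem WtP.x {ε : ℂ} {δ : A ≃ₐ[ℂ] A} (hδ0 : δ (X 0) = ε • X 0) (n : ℕ) :
    WtP ε δ n (X 0 ^ n) := by
  unfold WtP
  rw [map_pow, hδ0, smul_pow]

theorem WtP.y {a : ℕ} {ε : ℂ} {δ : A ≃ₐ[ℂ] A} (hδ1 : δ (X 1) = ε ^ a • X 1) (n : ℕ) :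
    WtP ε δ (a * n) (X 1 ^ n) := by
  unfold WtP
  rw [map_pow, hδ1, smul_pow, pow_mul]

theorem aux_special (r a : ℕ) (hr : 2 ≤ r) (ε : ℂ) (hε : IsPrimitiveRoot ε r)
    (δ : A ≃ₐ[ℂ] A) (hδ0 : δ (X 0) = ε • X 0) (hδ1 : δ (X 1) = ε ^ a • X 1)
    (S0 : Subalgebra ℂ A) (hS0 : ∀ f : A, f ∈ S0 ↔ δ f = f)
    (t : ℕ) (htr : t < r)
    (St : Submodule ↥S0 A) (hSt : ∀ f : A, f ∈ St ↔ δ f = ε ^ t • f)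
    (j : ℕ) (hjr : j < r) (hjt : a * j ≡ t [MOD r])
    (hB : ∀ d : Fin 2 →₀ ℕ, d 0 + a * d 1 ≡ t [MOD r] → t ≤ d 0 ∨ j ≤ d 1) :
    Subsingleton (((Ext ↥S0 (ModuleCat ↥S0) 1).obj
        (Opposite.op (ModuleCat.of ↥S0 ↥St))).obj (ModuleCat.of ↥S0 ↥S0)) := by
  have hε0 : ε ≠ 0 := hε.ne_zero (by omega)
  have hW0 : ∀ f : A, f ∈ S0 ↔ WtP ε δ 0 f := fun f => by
    rw [hS0]; unfold WtP; rw [pow_zero, one_smul]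
  have hWt : ∀ f : A, f ∈ St ↔ WtP ε δ t f := hSt
  have wx : WtP ε δ t (X 0 ^ t) := WtP.x hδ0 t
  have wy : WtP ε δ t (X 1 ^ j) := (WtP.y hδ1 j).congr hε hr hjt
  have wx' : WtP ε δ (r - t) (X 0 ^ (r - t)) := WtP.x hδ0 _
  have wy' : WtP ε δ (r - t) (X 1 ^ (r - j)) := by
    refine (WtP.y hδ1 (r - j)).congr hε hr ?_
    refine Nat.ModEq.add_right_cancel hjt ?_
    rw [← mul_add, Nat.sub_add_cancel hjr.le, Nat.sub_add_cancel htr.le]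
    exact (Nat.modEq_zero_iff_dvd.2 (dvd_mul_left r a)).trans
      (Nat.modEq_zero_iff_dvd.2 dvd_rfl).symm
  have hz : t + (r - t) ≡ 0 [MOD r] := by
    rw [Nat.add_sub_cancel' htr.le]; exact Nat.modEq_zero_iff_dvd.2 dvd_rfl
  have hprod : ∀ c h : A, WtP ε δ t c → WtP ε δ (r - t) h → c * h ∈ S0 := fun c h hc hh =>
    (hW0 _).2 ((hc.mul hh).congr hε hr hz)
  let xt : St := ⟨X 0 ^ t, (hWt _).2 wx⟩
  let yj : St := ⟨X 1 ^ j, (hWt _).2 wy⟩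
  let q : (S0 × S0) →ₗ[S0] St :=
    (LinearMap.toSpanSingleton S0 St xt).coprod (LinearMap.toSpanSingleton S0 St yj)
  have hqv : ∀ f g : S0, ((q (f, g) : St) : A) = (f : A) * X 0 ^ t + (g : A) * X 1 ^ j := by
    intro f g
    simp [q, xt, yj, LinearMap.coprod_apply, LinearMap.toSpanSingleton_apply, Subalgebra.smul_def]
  have gen : ∀ f : A, WtP ε δ t f →
      ∃ u v : S0, f = (u : A) * X 0 ^ t + (v : A) * X 1 ^ j := by
    intro f hf
    rw [f.as_sum]
    refine Finset.sum_induction _ (fun f : A => ∃ u v : S0, f = (u : A) * X 0 ^ t + (v : A) * X 1 ^ j)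
      ?_ ⟨0, 0, by simp⟩ ?_
    · rintro _ _ ⟨u, v, rfl⟩ ⟨u', v', rfl⟩
      exact ⟨u + u', v + v', by push_cast; ring⟩
    · intro d hd
      have hw := aux_support r a hr ε hε δ hδ0 hδ1 t f hf d hd
      have hm : WtP ε δ t (monomial d (coeff d f)) :=
        aux_weight r a hr ε hε δ hδ0 hδ1 t d _ hw
      rcases hB d hw with h | h
      · have e := aux_mono_split d (coeff d f) 0 t h
        refine ⟨⟨monomial (d - Finsupp.single 0 t) (coeff d f), (hW0 _).2 ?_⟩, 0, ?_⟩
        · refine wx.cancel hε0 (pow_ne_zero _ (X_ne_zero _)) ?_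
          rw [← e]; exact hm
        · refine e.trans ?_
          push_cast; ring
      · have e := aux_mono_split d (coeff d f) 1 j h
        refine ⟨0, ⟨monomial (d - Finsupp.single 1 j) (coeff d f), (hW0 _).2 ?_⟩, ?_⟩
        · refine wy.cancel hε0 (pow_ne_zero _ (X_ne_zero _)) ?_
          rw [← e]; exact hm
        · refine e.trans ?_
          push_cast; ring
  have hq : Function.Surjective q := by
    rintro ⟨f, hf⟩
    obtain ⟨u, v, e⟩ := gen f ((hWt f).1 hf)
    exact ⟨(u, v), Subtype.ext ((hqv u v).trans e.symm)⟩
  refine aux_ext_zero S0 St S0 (S0 × S0) q hq ?_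
  intro φ
  let κ : ∀ h : A, WtP ε δ (r - t) h → LinearMap.ker q := fun h hh =>
    ⟨(⟨X 1 ^ j * h, hprod _ _ wy hh⟩, -⟨X 0 ^ t * h, hprod _ _ wx hh⟩), by
      rw [LinearMap.mem_ker]
      apply Subtype.ext
      rw [hqv]
      push_cast
      ring⟩
  have hκ : ∀ h₁ h₂ (w₁ : WtP ε δ (r - t) h₁) (w₂ : WtP ε δ (r - t) h₂),
      h₁ * (φ (κ h₂ w₂) : A) = h₂ * (φ (κ h₁ w₁) : A) := by
    intro h₁ h₂ w₁ w₂
    have e : (⟨X 0 ^ t * h₁, hprod _ _ wx w₁⟩ : S0) • κ h₂ w₂ =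
        (⟨X 0 ^ t * h₂, hprod _ _ wx w₂⟩ : S0) • κ h₁ w₁ := by
      apply Subtype.ext
      apply Prod.ext
      · apply Subtype.ext
        change X 0 ^ t * h₁ * (X 1 ^ j * h₂) = X 0 ^ t * h₂ * (X 1 ^ j * h₁)
        ring
      · apply Subtype.ext
        change X 0 ^ t * h₁ * (-(X 0 ^ t * h₂)) = X 0 ^ t * h₂ * (-(X 0 ^ t * h₁))
        ring
    have e2 := congrArg (fun k => ((φ k : S0) : A)) e
    simp only [map_smul] at e2
    change X 0 ^ t * h₁ * (φ (κ h₂ w₂) : A) = X 0 ^ t * h₂ * (φ (κ h₁ w₁) : A) at e2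
    rw [mul_assoc, mul_assoc] at e2
    exact aux_X_mul 0 t e2
  obtain ⟨s, hs⟩ := aux_dvd 0 1 (by decide) _ _ _ _ (hκ _ _ wx' wy')
  have ws : WtP ε δ t s := by
    refine wx'.cancel hε0 (pow_ne_zero _ (X_ne_zero _)) ?_
    rw [← hs]
    exact ((hW0 _).1 (φ (κ _ wx')).2).congr hε hr (by rw [add_comm]; exact hz.symm)
  have hφ : ∀ h (w : WtP ε δ (r - t) h), (φ (κ h w) : A) = s * h := by
    intro h w
    have := hκ _ _ wx' w
    rw [hs] at this
    apply aux_X_mul 0 (r - t)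
    rw [this]; ring
  obtain ⟨u, v, e⟩ := gen s ws
  refine ⟨(LinearMap.toSpanSingleton S0 S0 v).coprod (LinearMap.toSpanSingleton S0 S0 (-u)), ?_⟩
  rintro ⟨⟨f, g⟩, hk⟩
  have hfg : (f : A) * X 0 ^ t + (g : A) * X 1 ^ j = 0 := by
    rw [← hqv, LinearMap.mem_ker.1 hk]; rfl
  obtain ⟨h, hh⟩ := aux_dvd 0 1 (by decide) t j (f : A) (-(g : A)) (by linear_combination hfg)
  have hf : (f : A) = X 1 ^ j * h := by
    apply aux_X_mul 0 t
    linear_combination hfg + X 1 ^ j * hh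
  have wh : WtP ε δ (r - t) h := by
    refine wy.cancel hε0 (pow_ne_zero _ (X_ne_zero _)) ?_
    rw [← hf]
    exact ((hW0 _).1 f.2).congr hε hr hz.symm
  have ek : (⟨(f, g), hk⟩ : LinearMap.ker q) = κ h wh := by
    apply Subtype.ext
    apply Prod.ext
    · exact Subtype.ext hf
    · apply Subtype.ext
      change (g : A) = -(X 0 ^ t * h)
      rw [← hh, neg_neg]
  rw [ek]
  apply Subtype.ext
  rw [hφ _ wh, e]
  simp only [LinearMap.coprod_apply, LinearMap.toSpanSingleton_apply]
  change X 1 ^ j * h * (v : A) + (-(X 0 ^ t * h)) * (-(u : A)) = _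
  ring

theorem aux_not_special (r a : ℕ) (hr : 2 ≤ r) (ε : ℂ) (hε : IsPrimitiveRoot ε r)
    (δ : A ≃ₐ[ℂ] A) (hδ0 : δ (X 0) = ε • X 0) (hδ1 : δ (X 1) = ε ^ a • X 1)
    (S0 : Subalgebra ℂ A) (hS0 : ∀ f : A, f ∈ S0 ↔ δ f = f)
    (t : ℕ) (htr : t < r)
    (St : Submodule ↥S0 A) (hSt : ∀ f : A, f ∈ St ↔ δ f = ε ^ t • f)
    (j : ℕ) (hjt : a * j ≡ t [MOD r])
    (b c : ℕ) (hbc : b + a * c ≡ t [MOD r]) (hb0 : 0 < b) (hbt : b < t) (hc0 : 0 < c) (hcj : c < j)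
    (hmin : ∀ d : Fin 2 →₀ ℕ, d 0 + a * d 1 ≡ t [MOD r] → d 0 < b → j ≤ d 1) :
    ¬ Subsingleton (((Ext ↥S0 (ModuleCat ↥S0) 1).obj
        (Opposite.op (ModuleCat.of ↥S0 ↥St))).obj (ModuleCat.of ↥S0 ↥S0)) := by
  intro hsub
  have hε0 : ε ≠ 0 := hε.ne_zero (by omega)
  have hW0 : ∀ f : A, f ∈ S0 ↔ WtP ε δ 0 f := fun f => by
    rw [hS0]; unfold WtP; rw [pow_zero, one_smul]
  have hWt : ∀ f : A, f ∈ St ↔ WtP ε δ t f := hSt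
  have wx : WtP ε δ t (X 0 ^ t) := WtP.x hδ0 t
  have wy : WtP ε δ t (X 1 ^ j) := (WtP.y hδ1 j).congr hε hr hjt
  have wx' : WtP ε δ (r - t) (X 0 ^ (r - t)) := WtP.x hδ0 _
  have hz : t + (r - t) ≡ 0 [MOD r] := by
    rw [Nat.add_sub_cancel' htr.le]; exact Nat.modEq_zero_iff_dvd.2 dvd_rfl
  have hprod : ∀ c h : A, WtP ε δ t c → WtP ε δ (r - t) h → c * h ∈ S0 := fun c h hc hh =>
    (hW0 _).2 ((hc.mul hh).congr hε hr hz)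
  let xt : St := ⟨X 0 ^ t, (hWt _).2 wx⟩
  let yj : St := ⟨X 1 ^ j, (hWt _).2 wy⟩
  obtain ⟨dm, hdm0, hdm1⟩ : ∃ dm : Fin 2 →₀ ℕ, dm 0 = t - b ∧ dm 1 = j - c :=
    ⟨Finsupp.single 0 (t - b) + Finsupp.single 1 (j - c), by simp, by simp⟩
  obtain ⟨m, hmdef⟩ : ∃ m : A, m = monomial dm 1 := ⟨_, rfl⟩
  have wm : WtP ε δ t m := by
    rw [hmdef]
    refine aux_weight r a hr ε hε δ hδ0 hδ1 t dm 1 ?_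
    rw [hdm0, hdm1]
    refine Nat.ModEq.add_right_cancel hbc ?_
    have : t - b + a * (j - c) + (b + a * c) = t + a * j := by
      have h1 : t - b + b = t := by omega
      have h2 : j - c + c = j := by omega
      calc _ = (t - b + b) + a * (j - c + c) := by ring
        _ = _ := by rw [h1, h2]
    rw [this]
    exact Nat.ModEq.add_left _ hjt
  let E : Submodule S0 (A × A × A) :=
    { carrier := {e | WtP ε δ t e.1 ∧ WtP ε δ t e.2.1 ∧ WtP ε δ t e.2.2 ∧
        X 0 ^ t * e.1 + X 1 ^ j * e.2.1 = m * e.2.2}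
      add_mem' := by
        rintro ⟨p, q, n⟩ ⟨p', q', n'⟩ ⟨h1, h2, h3, h4⟩ ⟨h1', h2', h3', h4'⟩
        refine ⟨h1.add h1', h2.add h2', h3.add h3', ?_⟩
        simp only [Prod.mk_add_mk] at h4 h4' ⊢
        linear_combination h4 + h4'
      zero_mem' := ⟨WtP.zero _ _ _, WtP.zero _ _ _, WtP.zero _ _ _, by simp⟩
      smul_mem' := by
        rintro ⟨s, hs⟩ ⟨p, q, n⟩ ⟨h1, h2, h3, h4⟩
        have ws := (hW0 s).1 hs
        have key : ∀ f : A, WtP ε δ t f → WtP ε δ t (s * f) := fun f hf => by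
          have := ws.mul hf
          rwa [zero_add] at this
        refine ⟨key _ h1, key _ h2, key _ h3, ?_⟩
        change X 0 ^ t * (s * p) + X 1 ^ j * (s * q) = m * (s * n)
        simp only at h4
        linear_combination s * h4 }
  let i : S0 →ₗ[S0] E := LinearMap.toSpanSingleton S0 E
    ⟨(X 1 ^ j, -X 0 ^ t, 0), wy, wx.neg, WtP.zero _ _ _, by simp; ring⟩
  have hiv : ∀ h : S0, ((i h : E) : A × A × A) = ((h : A) * X 1 ^ j, (h : A) * (-X 0 ^ t), 0) := by
    intro h
    simp [i, LinearMap.toSpanSingleton_apply, Subalgebra.smul_def]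
  let q : E →ₗ[S0] St :=
    { toFun := fun e => ⟨e.1.2.2, (hWt _).2 e.2.2.2.1⟩
      map_add' := fun _ _ => rfl
      map_smul' := fun _ _ => rfl }
  have hqs : ∀ n : A, WtP ε δ t n → ∃ p p' : A, WtP ε δ t p ∧ WtP ε δ t p' ∧
      X 0 ^ t * p + X 1 ^ j * p' = m * n := by
    intro f hf
    rw [f.as_sum]
    refine Finset.sum_induction _ (fun f : A => ∃ p p' : A, WtP ε δ t p ∧ WtP ε δ t p' ∧
      X 0 ^ t * p + X 1 ^ j * p' = m * f) ?_ ⟨0, 0, WtP.zero _ _ _, WtP.zero _ _ _, by simp⟩ ?_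
    · rintro _ _ ⟨u, v, h1, h2, h3⟩ ⟨u', v', h1', h2', h3'⟩
      exact ⟨u + u', v + v', h1.add h1', h2.add h2', by linear_combination h3 + h3'⟩
    · intro d hd
      have hw := aux_support r a hr ε hε δ hδ0 hδ1 t f hf d hd
      have hm : WtP ε δ t (monomial d (coeff d f)) :=
        aux_weight r a hr ε hε δ hδ0 hδ1 t d _ hw
      have hmm := wm.mul hm
      have em : m * monomial d (coeff d f) = monomial (dm + d) (coeff d f) := by
        rw [hmdef, monomial_mul, one_mul]
      rw [em] at hmm ⊢
      have hcase : t ≤ (dm + d) 0 ∨ j ≤ (dm + d) 1 := by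
        rw [Finsupp.add_apply, Finsupp.add_apply, hdm0, hdm1]
        by_cases hlt : d 0 < b
        · right
          have := hmin d hw hlt
          omega
        · left; omega
      rcases hcase with h | h
      · have e := aux_mono_split (dm + d) (coeff d f) 0 t h
        refine ⟨monomial (dm + d - Finsupp.single 0 t) (coeff d f), 0, ?_, WtP.zero _ _ _,
          by rw [mul_zero, add_zero]; exact e.symm⟩
        refine wx.cancel hε0 (pow_ne_zero _ (X_ne_zero _)) ?_
        rw [← e]; exact hmm
      · have e := aux_mono_split (dm + d) (coeff d f) 1 j h
        refine ⟨0, monomial (dm + d - Finsupp.single 1 j) (coeff d f), WtP.zero _ _ _, ?_,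
          by rw [mul_zero, zero_add]; exact e.symm⟩
        refine wy.cancel hε0 (pow_ne_zero _ (X_ne_zero _)) ?_
        rw [← e]; exact hmm
  have hq : Function.Surjective q := by
    rintro ⟨n, hn⟩
    obtain ⟨p, p', h1, h2, h3⟩ := hqs n ((hWt n).1 hn)
    exact ⟨⟨(p, p', n), h1, h2, (hWt n).1 hn, h3⟩, rfl⟩
  have hi : Function.Injective i := by
    intro h h' hh
    have := congrArg (fun e : E => e.1.1) hh
    simp only [hiv] at this
    apply Subtype.ext
    exact mul_right_cancel₀ (pow_ne_zero _ (X_ne_zero _)) this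
  have hiq : ∀ n, q (i n) = 0 := by
    intro n
    apply Subtype.ext
    change ((i n : E) : A × A × A).2.2 = 0
    rw [hiv]
  have hex : ∀ e, q e = 0 → ∃ n, i n = e := by
    rintro ⟨⟨p, p', n⟩, h1, h2, h3, h4⟩ he
    have hn : n = 0 := congrArg Subtype.val he
    subst hn
    simp only [mul_zero] at h4
    obtain ⟨h, hh⟩ := aux_dvd 0 1 (by decide) t j p (-p') (by linear_combination h4)
    have hf : p = X 1 ^ j * h := by
      apply aux_X_mul 0 t
      linear_combination h4 + X 1 ^ j * hh
    have wh : WtP ε δ 0 h := by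
      refine wy.cancel hε0 (pow_ne_zero _ (X_ne_zero _)) ?_
      rw [← hf]
      exact h1
    refine ⟨⟨h, (hW0 h).2 wh⟩, ?_⟩
    apply Subtype.ext
    rw [hiv]
    refine Prod.ext ?_ (Prod.ext ?_ rfl)
    · simp only [hf]; ring
    · simp only; linear_combination hh
  obtain ⟨σ, hσ⟩ := aux_ext_split S0 St S0 E i q hq hi hiq hex hsub
  have csm : ∀ (s : S0) (v : St), ((s • v : St) : A) = (s : A) * (v : A) := fun _ _ => rfl
  have csE1 : ∀ (s : S0) (v : E), ((s • v : E) : A × A × A).1 = (s : A) * (v : A × A × A).1 :=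
    fun _ _ => rfl
  have csE2 : ∀ (s : S0) (v : E), ((s • v : E) : A × A × A).2.1 = (s : A) * (v : A × A × A).2.1 :=
    fun _ _ => rfl
  have hxt : (xt : A) = X 0 ^ t := rfl
  have hyj : (yj : A) = X 1 ^ j := rfl
  obtain ⟨sx, hsx⟩ : ∃ s : S0, (s : A) = X 0 ^ t * X 0 ^ (r - t) := ⟨⟨_, hprod _ _ wx wx'⟩, rfl⟩
  obtain ⟨sy, hsy⟩ : ∃ s : S0, (s : A) = X 1 ^ j * X 0 ^ (r - t) := ⟨⟨_, hprod _ _ wy wx'⟩, rfl⟩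
  have e1 : sx • yj = sy • xt := by
    apply Subtype.ext
    rw [csm, csm, hsx, hsy, hxt, hyj]
    ring
  have e2 : sx • σ yj = sy • σ xt := by
    rw [← map_smul, e1, map_smul]
  have e3 : X 0 ^ t * (σ yj).1.1 = X 1 ^ j * (σ xt).1.1 := by
    have := congrArg (fun z : E => (z : A × A × A).1) e2
    simp only [csE1, hsx, hsy] at this
    apply aux_X_mul 0 (r - t)
    linear_combination this
  have e4 : X 0 ^ t * (σ yj).1.2.1 = X 1 ^ j * (σ xt).1.2.1 := by
    have := congrArg (fun z : E => (z : A × A × A).2.1) e2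
    simp only [csE2, hsx, hsy] at this
    apply aux_X_mul 0 (r - t)
    linear_combination this
  obtain ⟨α, hα⟩ := aux_dvd 0 1 (by decide) _ _ _ _ e3
  obtain ⟨β, hβ⟩ := aux_dvd 0 1 (by decide) _ _ _ _ e4
  have e5 : (σ xt).1.2.2 = X 0 ^ t := congrArg Subtype.val (hσ xt)
  have e6 := (σ xt).2.2.2.2
  rw [hα, hβ, e5] at e6
  have e7 : m = X 0 ^ t * α + X 1 ^ j * β := by
    apply aux_X_mul 0 t
    linear_combination -e6
  have e8 := congrArg (coeff dm) e7
  rw [coeff_add, X_pow_eq_monomial, X_pow_eq_monomial, coeff_monomial_mul', coeff_monomial_mul',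
    if_neg, if_neg] at e8
  · simp [hmdef] at e8
  · intro h
    have := h 1
    rw [hdm1] at this
    simp at this
    omega
  · intro h
    have := h 0
    rw [hdm0] at this
    simp at this
    omega

end algebra

/-- For the cyclic quotient singularity `(1/r)(1,a)` with
`gcd(r,a) = 1`, a module of semi-invariants `S_t` (`0 ≤ t ≤ r`) satisfies
`Ext¹_{S₀}(S_t, S₀) = 0` if and only if `t ∈ I(r,a)`. -/
theorem special_semiinvariants_iff_iSeries (r a : ℕ) (hr : 2 ≤ r) (ha1 : 1 ≤ a)
    (ha2 : a ≤ r - 1) (hgcd : Nat.gcd r a = 1)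
    (ε : ℂ) (hε : IsPrimitiveRoot ε r)
    (δ : MvPolynomial (Fin 2) ℂ ≃ₐ[ℂ] MvPolynomial (Fin 2) ℂ)
    (hδ0 : δ (X 0) = ε • X 0) (hδ1 : δ (X 1) = ε ^ a • X 1)
    (S0 : Subalgebra ℂ (MvPolynomial (Fin 2) ℂ))
    (hS0 : ∀ f : MvPolynomial (Fin 2) ℂ, f ∈ S0 ↔ δ f = f)
    (t : ℕ) (ht : t ≤ r)
    (St : Submodule ↥S0 (MvPolynomial (Fin 2) ℂ))
    (hSt : ∀ f : MvPolynomial (Fin 2) ℂ, f ∈ St ↔ δ f = ε ^ t • f) :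
    Subsingleton (((Ext ↥S0 (ModuleCat ↥S0) 1).obj
        (Opposite.op (ModuleCat.of ↥S0 ↥St))).obj (ModuleCat.of ↥S0 ↥S0)) ↔
      t ∈ ISet r a := by
  have har : a < r := by omega
  -- the free case
  by_cases htriv : t = 0 ∨ t = r
  · have h1 : t ∈ ISet r a := by
      rcases htriv with rfl | rfl
      · exact aux_reach r a ha1 har
      · exact ⟨0, by simp [iSeq]⟩
    refine iff_of_true ?_ h1
    have h2 : ∀ f : MvPolynomial (Fin 2) ℂ, f ∈ St ↔ δ f = ε ^ 0 • f := by
      rcases htriv with rfl | rfl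
      · exact hSt
      · intro f; rw [hSt, hε.pow_eq_one, pow_zero]
    exact aux_special r a hr ε hε δ hδ0 hδ1 S0 hS0 0 (by omega) St h2 0 (by omega)
      (by rw [mul_zero]) (fun d _ => Or.inl (Nat.zero_le _))
  push Not at htriv
  have ht0 : 0 < t := by omega
  have htr : t < r := by omega
  have hne : ¬ 0 ≡ t [MOD r] := fun h => by
    have := Nat.ModEq.eq_of_lt_of_lt h (by omega) htr
    omega
  have hex : ∃ j, a * j ≡ t [MOD r] := by
    have hco : Nat.gcd a r = 1 := by rw [Nat.gcd_comm]; exact hgcd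
    obtain ⟨m, hm⟩ := Nat.exists_mul_mod_eq_one_of_coprime hco (by omega)
    refine ⟨m * t, ?_⟩
    have h1 : a * m ≡ 1 [MOD r] := by
      unfold Nat.ModEq
      rw [hm.2, Nat.mod_eq_of_lt (by omega)]
    have := h1.mul_right t
    rwa [one_mul, mul_assoc] at this
  classical
  obtain ⟨j, hjt, hjm⟩ : ∃ j, a * j ≡ t [MOD r] ∧ ∀ c < j, ¬ a * c ≡ t [MOD r] :=
    ⟨Nat.find hex, Nat.find_spec hex, fun c hc => Nat.find_min hex hc⟩
  have hj0 : 0 < j := by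
    rcases Nat.eq_zero_or_pos j with h | h
    · subst h; rw [mul_zero] at hjt; exact absurd hjt hne
    · exact h
  have hjr : j < r := by
    by_contra h
    have h1 : j % r < r := Nat.mod_lt _ (by omega)
    refine hjm (j % r) (by omega) ?_
    exact (Nat.ModEq.mul_left a (Nat.mod_modEq j r)).trans hjt
  have hsplit : ∀ c, c ≤ j → a * (j - c) + a * c = a * j := fun c hc => by
    rw [← mul_add, Nat.sub_add_cancel hc]
  rw [aux_comb r a ha1 har t j ht0 htr hj0 hjt (fun c _ hc => hjm c hc)]
  constructor
  · intro hsub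
    by_contra hcon
    push Not at hcon
    obtain ⟨c, x, hc0, hcj, hcx, hxt⟩ := hcon
    have hbex : ∃ b, b < t ∧ ∃ c < j, b + a * c ≡ t [MOD r] := by
      refine ⟨x, hxt, j - c, by omega, ?_⟩
      refine (Nat.ModEq.add_right _ hcx.symm).trans ?_
      rw [add_comm, hsplit c hcj.le]
      exact hjt
    obtain ⟨b, ⟨hbt, c', hc'j, hbc⟩, hbmin⟩ : ∃ b, (b < t ∧ ∃ c < j, b + a * c ≡ t [MOD r]) ∧
        ∀ b' < b, ¬ (b' < t ∧ ∃ c < j, b' + a * c ≡ t [MOD r]) :=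
      ⟨Nat.find hbex, Nat.find_spec hbex, fun b' hb' => Nat.find_min hbex hb'⟩
    have hb0 : 0 < b := by
      rcases Nat.eq_zero_or_pos b with h | h
      · subst h; rw [zero_add] at hbc; exact absurd hbc (hjm _ hc'j)
      · exact h
    have hc'0 : 0 < c' := by
      rcases Nat.eq_zero_or_pos c' with h | h
      · subst h
        rw [mul_zero, add_zero] at hbc
        have := Nat.ModEq.eq_of_lt_of_lt hbc (by omega) htr
        omega
      · exact h
    refine aux_not_special r a hr ε hε δ hδ0 hδ1 S0 hS0 t htr St hSt j hjt b c' hbc hb0 hbt hc'0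
      hc'j ?_ hsub
    intro d hd hdb
    by_contra hlt
    exact hbmin (d 0) hdb ⟨by omega, d 1, by omega, hd⟩
  · intro h
    refine aux_special r a hr ε hε δ hδ0 hδ1 S0 hS0 t htr St hSt j hjr hjt ?_
    intro d hd
    by_contra hcon
    push Not at hcon
    obtain ⟨h0, h1⟩ := hcon
    rcases Nat.eq_zero_or_pos (d 1) with h2 | h2
    · rw [h2, mul_zero, add_zero] at hd
      have := Nat.ModEq.eq_of_lt_of_lt hd (by omega) htr
      omega
    · have := h (j - d 1) (d 0) (by omega) (by omega) (by
        refine Nat.ModEq.add_right_cancel' (a * d 1) ?_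
        rw [hsplit _ h1.le]
        exact hjt.trans hd.symm)
      omega
end
end
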